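/- arXiv:2407.20226 — 5 statements merged into one kernel-verified Lean document; each statement's English description precedes it below -/
import Mathlib

section
/- Let n ≥ 3 and let s : E(K_n) → ℝ be a shift vector such that ⋂_{e ∈ E(K_n)} [s_e, s_e + 1] = ∅. Then the shifted-interval MST distribution M_s on spanning trees of K_n is not uniform: there exist spanning trees T, T' of K_n with P_{M_s}(T) ≠ P_{M_s}(T'). -/
open MeasureTheory SimpleGraph
open scoped Classical

noncomputable section

namespace RST

variable {V : Type*}

/-- The graph on `V` whose edge set is the finset `T`. -/
def spanGraph (T : Finset (Sym2 V)) : SimpleGraph V :=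
  SimpleGraph.fromEdgeSet ↑T

/-- `T` is (the edge set of) a spanning tree of `G`. -/
def IsSpanningTree (G : SimpleGraph V) (T : Finset (Sym2 V)) : Prop :=
  ↑T ⊆ G.edgeSet ∧ (spanGraph T).Connected ∧ (spanGraph T).IsAcyclic

/-- Total weight `∑_{e ∈ T} w e` of the tree `T`. -/
def treeWeight (G : SimpleGraph V) [Fintype V] (w : G.edgeSet → ℝ) (T : Finset (Sym2 V)) : ℝ :=
  ∑ e : G.edgeSet, if (e : Sym2 V) ∈ T then w e else 0

/-- The event that `T` is the unique minimum-weight spanning tree of `G`. -/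
def mstEvent (G : SimpleGraph V) [Fintype V] (T : Finset (Sym2 V)) : Set (G.edgeSet → ℝ) :=
  {w | IsSpanningTree G T ∧ ∀ T' : Finset (Sym2 V), IsSpanningTree G T' → T' ≠ T →
    treeWeight G w T < treeWeight G w T'}

/-- Shifted-interval product measure: each edge `e` independently gets a weight drawn
uniformly from `[s e, s e + 1]`. -/
def shiftMeasure (G : SimpleGraph V) [Fintype V] (s : G.edgeSet → ℝ) :
    Measure (G.edgeSet → ℝ) :=
  Measure.pi fun e => (volume : Measure ℝ).restrict (Set.Icc (s e) (s e + 1))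

/-- `P_{M_s}(T)`: the probability under the shifted-interval MST distribution `M_s`
that `T` is the (unique) minimum-weight spanning tree. -/
def shiftedMstProb (G : SimpleGraph V) [Fintype V] (s : G.edgeSet → ℝ)
    (T : Finset (Sym2 V)) : ℝ :=
  (shiftMeasure G s (mstEvent G T)).toReal


lemma isSpanningTree_of_parent {n : ℕ} (T : Finset (Sym2 (Fin n))) (r : Fin n)
    (p : Fin n → Fin n) (d : Fin n → ℕ)
    (hp : ∀ v, v ≠ r → d (p v) < d v ∧ s(v, p v) ∈ T)
    (hT : ∀ e ∈ T, ¬ e.IsDiag) (hc : T.card + 1 ≤ n) :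
    IsSpanningTree (⊤ : SimpleGraph (Fin n)) T := by
  have hreach : ∀ k v, d v ≤ k → (spanGraph T).Reachable v r := by
    intro k
    induction k with
    | zero =>
      intro v hv
      by_cases h : v = r
      · subst h; exact Reachable.refl _
      · have := (hp v h).1; omega
    | succ k ih =>
      intro v hv
      by_cases h : v = r
      · subst h; exact Reachable.refl _
      · obtain ⟨h1, h2⟩ := hp v h
        have hadj : (spanGraph T).Adj v (p v) := by
          unfold spanGraph
          rw [fromEdgeSet_adj]
          exact ⟨by exact_mod_cast h2, fun hh => by rw [← hh] at h1; omega⟩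
        exact hadj.reachable.trans (ih _ (by omega))
  have hconn : (spanGraph T).Connected := by
    haveI : Nonempty (Fin n) := ⟨r⟩
    exact ⟨fun u v => (hreach _ u le_rfl).trans (hreach _ v le_rfl).symm⟩
  have hes : (spanGraph T).edgeSet = (T : Set (Sym2 (Fin n))) := by
    unfold spanGraph
    rw [edgeSet_fromEdgeSet]
    ext e
    simp only [Set.mem_sdiff, Finset.mem_coe]
    exact ⟨fun h => h.1, fun h => ⟨h, hT e h⟩⟩
  refine ⟨?_, hconn, ?_⟩
  · intro e he
    rw [edgeSet_top]
    exact hT e he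
  · have h1 := hconn.card_vert_le_card_edgeSet_add_one
    have h2 : Nat.card (spanGraph T).edgeSet = T.card := by
      rw [hes]; simp
    have : (spanGraph T).IsTree := by
      rw [isTree_iff_connected_and_card]
      refine ⟨hconn, ?_⟩
      rw [h2] at h1 ⊢
      simp at h1 ⊢
      omega
    exact this.isAcyclic

/-- The exchange pair for an edge pair. -/
def Exch (n : ℕ) (e f : Sym2 (Fin n)) : Prop :=
  ∃ T : Finset (Sym2 (Fin n)), IsSpanningTree (⊤ : SimpleGraph (Fin n)) T ∧
    IsSpanningTree (⊤ : SimpleGraph (Fin n)) (insert e (T.erase f)) ∧ e ∉ T ∧ f ∈ T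

lemma exch_of {n : ℕ} (e f : Sym2 (Fin n)) (he : ¬ e.IsDiag) (r : Fin n)
    (p q : Fin n → Fin n) (d d' : Fin n → ℕ)
    (hp : ∀ v, v ≠ r → d (p v) < d v)
    (hq : ∀ v, v ≠ r → d' (q v) < d' v ∧
      (s(v, q v) = e ∨ (s(v, q v) ≠ f ∧ ∃ u, u ≠ r ∧ s(u, p u) = s(v, q v))))
    (h1 : ∀ v, v ≠ r → s(v, p v) ≠ e) (h2 : ∃ v, v ≠ r ∧ s(v, p v) = f) : Exch n e f := by
  have hpos : 0 < n := r.pos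
  set T : Finset (Sym2 (Fin n)) := (Finset.univ.erase r).image (fun v => s(v, p v)) with hTdef
  have hmem : ∀ x, x ∈ T ↔ ∃ v, v ≠ r ∧ s(v, p v) = x := by
    intro x; simp [hTdef]
  have hdiag : ∀ x ∈ T, ¬ x.IsDiag := by
    intro x hx
    obtain ⟨v, hv, rfl⟩ := (hmem x).1 hx
    rw [Sym2.mk_isDiag_iff]
    intro h
    have := hp v hv
    rw [← h] at this; omega
  have hcard : T.card + 1 ≤ n := by
    have h := Finset.card_image_le (s := Finset.univ.erase r) (f := fun v => s(v, p v))
    rw [Finset.card_erase_of_mem (Finset.mem_univ _), Finset.card_univ, Fintype.card_fin] at h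
    rw [← hTdef] at h
    omega
  have hf : f ∈ T := (hmem f).2 h2
  refine ⟨T, ?_, ?_, ?_, hf⟩
  · exact isSpanningTree_of_parent T r p d (fun v hv => ⟨hp v hv, (hmem _).2 ⟨v, hv, rfl⟩⟩)
      hdiag hcard
  · refine isSpanningTree_of_parent _ r q d' (fun v hv => ⟨(hq v hv).1, ?_⟩) ?_ ?_
    · rw [Finset.mem_insert, Finset.mem_erase]
      rcases (hq v hv).2 with h | ⟨h, h'⟩
      · exact Or.inl h
      · exact Or.inr ⟨h, (hmem _).2 h'⟩
    · intro x hx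
      rw [Finset.mem_insert, Finset.mem_erase] at hx
      rcases hx with rfl | hx
      · exact he
      · exact hdiag x hx.2
    · have h3 := Finset.card_insert_le e (T.erase f)
      rw [Finset.card_erase_of_mem hf] at h3
      have := Finset.card_pos.2 ⟨f, hf⟩
      omega
  · intro h
    obtain ⟨v, hv, h⟩ := (hmem e).1 h
    exact h1 v hv h

lemma exch_shared {n : ℕ} (a b c : Fin n) (hab : a ≠ b) (hbc : b ≠ c) (hac : a ≠ c) :
    Exch n s(a, b) s(b, c) := by
  refine exch_of _ _ (by simpa using hab) c (fun _ => c) (fun v => if v = b then a else c)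
    (fun v => if v = c then 0 else 1) (fun v => if v = c then 0 else if v = b then 2 else 1)
    ?_ ?_ ?_ ⟨b, hbc, rfl⟩
  · intro v hv; simp [hv]
  · intro v hv
    by_cases hvb : v = b
    · subst hvb
      simp [hv, hac, hab, Sym2.eq_swap]
    · simp only [hv, hvb, if_false, if_true]
      refine ⟨by norm_num, Or.inr ⟨?_, v, hv, rfl⟩⟩
      simp only [ne_eq, Sym2.eq_iff]
      tauto
  · intro v hv
    simp only [ne_eq, Sym2.eq_iff]
    rintro (⟨h1, h2⟩ | ⟨h1, h2⟩)
    · exact hbc h2.symm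
    · exact hac h2.symm

lemma exch_disj {n : ℕ} (a b c d : Fin n) (hab : a ≠ b) (hcd : c ≠ d) (hac : a ≠ c)
    (had : a ≠ d) (hbc : b ≠ c) (hbd : b ≠ d) :
    Exch n s(a, b) s(c, d) := by
  refine exch_of _ _ (by simpa using hab) c (fun v => if v = b then d else c)
    (fun v => if v = b then a else if v = d then b else c)
    (fun v => if v = c then 0 else if v = b then 2 else 1)
    (fun v => if v = c then 0 else if v = b then 2 else if v = d then 3 else 1)
    ?_ ?_ ?_ ⟨d, hcd.symm, by simp [hbd.symm, Sym2.eq_swap]⟩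
  · intro v hv
    by_cases hvb : v = b
    · subst hvb; simp [hv, hcd.symm, hbd.symm]
    · simp [hv, hvb]
  · intro v hv
    by_cases hvb : v = b
    · subst hvb
      simp [hv, hac, hab, had, Sym2.eq_swap]
    · by_cases hvd : v = d
      · subst hvd
        simp only [hv, hvb, hbc, if_false, if_true]
        refine ⟨by norm_num, Or.inr ⟨?_, b, hbc, by simp [Sym2.eq_swap]⟩⟩
        simp only [ne_eq, Sym2.eq_iff]
        tauto
      · simp only [hv, hvb, hvd, if_false, if_true]
        refine ⟨by norm_num, Or.inr ⟨?_, v, hv, by simp [hvb]⟩⟩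
        simp only [ne_eq, Sym2.eq_iff]
        tauto
  · intro v hv
    simp only [ne_eq, Sym2.eq_iff]
    by_cases hvb : v = b
    · subst hvb
      simp only [if_true]
      rintro (⟨h1, h2⟩ | ⟨h1, h2⟩)
      · exact hab h1.symm
      · exact had h2.symm
    · simp only [hvb, if_false]
      rintro (⟨h1, h2⟩ | ⟨h1, h2⟩)
      · exact hbc h2.symm
      · exact h1

lemma exch_all {n : ℕ} (e f : Sym2 (Fin n)) (he : ¬ e.IsDiag) (hf : ¬ f.IsDiag) (hef : e ≠ f) :
    Exch n e f := by
  induction e with | _ a b =>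
  induction f with | _ c d =>
  rw [Sym2.mk_isDiag_iff] at he hf
  have hef' : ¬ ((a = c ∧ b = d) ∨ (a = d ∧ b = c)) := fun h => hef (Sym2.eq_iff.2 h)
  by_cases hac : a = c
  · subst hac
    rw [Sym2.eq_swap (a := a) (b := b)]
    exact exch_shared b a d (Ne.symm he) hf (by tauto)
  by_cases had : a = d
  · subst had
    rw [Sym2.eq_swap (a := a) (b := b), Sym2.eq_swap (a := c) (b := a)]
    exact exch_shared b a c (Ne.symm he) (Ne.symm hf) (by tauto)
  by_cases hbc : b = c
  · subst hbc
    exact exch_shared a b d he hf had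
  by_cases hbd : b = d
  · subst hbd
    rw [Sym2.eq_swap (a := c) (b := b)]
    exact exch_shared a b c he (Ne.symm hf) hac
  exact exch_disj a b c d he hf hac had hbc hbd

lemma treeWeight_exch {V : Type*} [Fintype V] (G : SimpleGraph V) (w : G.edgeSet → ℝ)
    (T : Finset (Sym2 V))
    (e f : G.edgeSet) (he : (e : Sym2 V) ∉ T) (hf : (f : Sym2 V) ∈ T) (hw : w e < w f) :
    treeWeight G w (insert (e : Sym2 V) (T.erase f)) < treeWeight G w T := by
  have hef : e ≠ f := by rintro rfl; exact he hf
  have key : treeWeight G w T = treeWeight G w (insert (e : Sym2 V) (T.erase f)) + (w f - w e) := by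
    have h : w f - w e = ∑ x : G.edgeSet, ((if x = f then w f else 0) - (if x = e then w e else 0)) := by
      simp [Finset.sum_sub_distrib]
    rw [h]
    unfold treeWeight
    rw [← Finset.sum_add_distrib]
    refine Finset.sum_congr rfl fun x _ => ?_
    by_cases h1 : x = e
    · subst h1; simp [he, hef]
    · by_cases h2 : x = f
      · subst h2
        have : (x : Sym2 V) ≠ e := fun h => h1 (Subtype.ext h)
        simp [hf, h1, this]
      · have h3 : (x : Sym2 V) ≠ e := fun h => h1 (Subtype.ext h)
        have h4 : (x : Sym2 V) ≠ f := fun h => h2 (Subtype.ext h)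
        simp [h1, h2, h3, h4]
  linarith

lemma prob_zero {V : Type*} [Fintype V] (G : SimpleGraph V) (s : G.edgeSet → ℝ)
    (T : Finset (Sym2 V)) (e f : G.edgeSet) (he : (e : Sym2 V) ∉ T) (hf : (f : Sym2 V) ∈ T)
    (hT' : IsSpanningTree G (insert (e : Sym2 V) (T.erase f))) (hs : s e + 1 < s f) :
    shiftedMstProb G s T = 0 := by
  have hae : ∀ x : G.edgeSet, ∀ᵐ w ∂(shiftMeasure G s), w x ∈ Set.Icc (s x) (s x + 1) := by
    intro x
    have := ae_restrict_mem (μ := (volume : Measure ℝ))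
      (measurableSet_Icc (a := s x) (b := s x + 1))
    exact (Measure.tendsto_eval_ae_ae (i := x)
      (μ := fun e => (volume : Measure ℝ).restrict (Set.Icc (s e) (s e + 1)))).eventually this
  unfold shiftedMstProb
  have h0 : shiftMeasure G s (mstEvent G T) = 0 := by
    refine measure_mono_null (t := {w | ¬ (w e < w f)}) ?_ ?_
    · intro w hw h
      have h1 := hw.2 _ hT' (by
        intro h; exact he (h ▸ Finset.mem_insert_self _ _))
      have h2 := treeWeight_exch G w T e f he hf h
      exact lt_asymm h1 h2
    · change ∀ᵐ w ∂(shiftMeasure G s), w e < w f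
      filter_upwards [hae e, hae f] with w h1 h2
      linarith [h1.2, h2.1]
  rw [h0]; rfl

lemma exists_pos {V : Type*} [Fintype V] (G : SimpleGraph V) (s : G.edgeSet → ℝ)
    (T₀ : Finset (Sym2 V)) (h₀ : IsSpanningTree G T₀) :
    ∃ T, IsSpanningTree G T ∧ shiftedMstProb G s T ≠ 0 := by
  set w₀ : G.edgeSet → ℝ := fun x => s x + 1 / 2 with hw₀
  obtain ⟨T, hT, hmin⟩ := Finset.exists_min_image
    (Finset.univ.filter (fun T : Finset (Sym2 V) => IsSpanningTree G T))
    (treeWeight G w₀) ⟨T₀, by simpa using h₀⟩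
  have hT : IsSpanningTree G T := by simpa using hT
  refine ⟨T, hT, ?_⟩
  set I : G.edgeSet → Set ℝ := fun x =>
    if (x : Sym2 V) ∈ T then Set.Ioo (s x) (s x + 1 / 2) else Set.Ioo (s x + 1 / 2) (s x + 1)
    with hI
  have hsub : Set.pi Set.univ I ⊆ mstEvent G T := by
    intro w hw
    refine ⟨hT, fun T' hT' hne => ?_⟩
    have h1 : treeWeight G w₀ T ≤ treeWeight G w₀ T' := hmin T' (by simpa using hT')
    have h2 : treeWeight G w T - treeWeight G w₀ T < treeWeight G w T' - treeWeight G w₀ T' := by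
      unfold treeWeight
      rw [← Finset.sum_sub_distrib, ← Finset.sum_sub_distrib]
      apply Finset.sum_lt_sum
      · intro x _
        have hx := hw x (Set.mem_univ _)
        by_cases h : (x : Sym2 V) ∈ T <;> by_cases h' : (x : Sym2 V) ∈ T' <;>
          simp only [hI, h, h', if_true, if_false, hw₀, Set.mem_Ioo] at hx ⊢ <;> linarith
      · have : ∃ y, ¬ (y ∈ T' ↔ y ∈ T) := by
          by_contra hcon
          push Not at hcon
          exact hne (Finset.ext hcon)
        obtain ⟨y, hy⟩ := this
        have hyG : y ∈ G.edgeSet := by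
          by_cases h : y ∈ T
          · exact hT.1 h
          · exact hT'.1 (by simp only [Finset.mem_coe]; tauto)
        refine ⟨⟨y, hyG⟩, Finset.mem_univ _, ?_⟩
        have hx := hw ⟨y, hyG⟩ (Set.mem_univ _)
        by_cases h : y ∈ T <;> by_cases h' : y ∈ T' <;>
          simp only [hI, h, h', if_true, if_false, hw₀, Set.mem_Ioo] at hx ⊢ <;>
          first | linarith | (exfalso; tauto)
    linarith
  have hpos : shiftMeasure G s (Set.pi Set.univ I) ≠ 0 := by
    unfold shiftMeasure
    rw [Measure.pi_pi, Finset.prod_ne_zero_iff]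
    intro x _
    have hIm : MeasurableSet (I x) := by
      simp only [hI]; split_ifs <;> exact measurableSet_Ioo
    rw [Measure.restrict_apply hIm]
    have hIs : I x ∩ Set.Icc (s x) (s x + 1) = I x := by
      rw [Set.inter_eq_left]
      intro t ht
      simp only [hI] at ht
      split_ifs at ht <;> constructor <;> linarith [ht.1, ht.2]
    rw [hIs]
    simp only [hI]
    split_ifs <;> rw [Real.volume_Ioo] <;> simp <;> norm_num
  have hfin : IsFiniteMeasure (shiftMeasure G s) := by
    unfold shiftMeasure; infer_instance
  unfold shiftedMstProb
  rw [ENNReal.toReal_ne_zero]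
  exact ⟨fun h => hpos (measure_mono_null hsub h), measure_ne_top _ _⟩

/-- If `n ≥ 3` and the intervals `[s_e, s_e + 1]` over the edges of `K_n` have empty
intersection, then the shifted-interval MST distribution `M_s` on spanning trees of
`K_n` is not uniform. -/
theorem shifted_nonoverlap_not_uniform (n : ℕ) (hn : 3 ≤ n)
    (s : (⊤ : SimpleGraph (Fin n)).edgeSet → ℝ)
    (hcap : (⋂ e : (⊤ : SimpleGraph (Fin n)).edgeSet, Set.Icc (s e) (s e + 1)) = ∅) :
    ∃ T T' : Finset (Sym2 (Fin n)),
      IsSpanningTree (⊤ : SimpleGraph (Fin n)) T ∧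
      IsSpanningTree (⊤ : SimpleGraph (Fin n)) T' ∧
      shiftedMstProb (⊤ : SimpleGraph (Fin n)) s T ≠
        shiftedMstProb (⊤ : SimpleGraph (Fin n)) s T' := by
  haveI : Nonempty (⊤ : SimpleGraph (Fin n)).edgeSet :=
    ⟨⟨s(⟨0, by omega⟩, ⟨1, by omega⟩), by simp⟩⟩
  obtain ⟨f, hf⟩ := Finite.exists_max s
  have hex : ∃ e, s e + 1 < s f := by
    by_contra hcon
    push Not at hcon
    have : s f ∈ (⋂ e : (⊤ : SimpleGraph (Fin n)).edgeSet, Set.Icc (s e) (s e + 1)) :=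
      Set.mem_iInter.2 fun e => ⟨hf e, hcon e⟩
    rw [hcap] at this
    exact this
  obtain ⟨e, he⟩ := hex
  have hef : e ≠ f := by rintro rfl; linarith
  obtain ⟨T, hT, hT', heT, hfT⟩ := exch_all (e : Sym2 (Fin n)) f
    (not_isDiag_of_mem_edgeSet _ e.2) (not_isDiag_of_mem_edgeSet _ f.2)
    (fun h => hef (Subtype.ext h))
  obtain ⟨T₁, hT₁, hne⟩ := exists_pos (⊤ : SimpleGraph (Fin n)) s T hT
  refine ⟨T₁, T, hT₁, hT, ?_⟩
  rw [prob_zero _ s T e f heT hfT (by convert hT') he]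
  exact hne

end RST
end
end

section
/- Let G be a finite connected simple graph, let s : E(G) → ℝ be a shift vector, fix an edge k ∈ E(G), and for t ∈ ℝ let s(k,t) be the shift vector agreeing with s except that its k-coordinate is s_k + t. Then for every edge j ∈ E(G) with j ≠ k, the function t ↦ P_{M_{s(k,t)}}(e_j ∈ T), the probability under the shifted-interval MST distribution M_{s(k,t)} that the minimum spanning tree contains the edge e_j, is weakly increasing in t. -/
open MeasureTheory SimpleGraph
open scoped Classical

noncomputable section

namespace RST

variable {V : Type*}

/-- The probability under `M_s` that the minimum spanning tree contains the edge `j`. -/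
def edgeInclusionProb (G : SimpleGraph V) [Fintype V] (s : G.edgeSet → ℝ)
    (j : G.edgeSet) : ℝ :=
  (shiftMeasure G s {w | ∃ T : Finset (Sym2 V), IsSpanningTree G T ∧
    (∀ T' : Finset (Sym2 V), IsSpanningTree G T' → T' ≠ T →
      treeWeight G w T < treeWeight G w T') ∧ (j : Sym2 V) ∈ T}).toReal

lemma spanGraph_adj {T : Finset (Sym2 V)} {a b : V} :
    (spanGraph T).Adj a b ↔ s(a, b) ∈ T ∧ a ≠ b := by
  simp [spanGraph]

lemma spanGraph_mono {T T' : Finset (Sym2 V)} (h : T ⊆ T') : spanGraph T ≤ spanGraph T' := by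
  intro a b hab
  rw [spanGraph_adj] at *
  exact ⟨h hab.1, hab.2⟩

lemma reach_erase {T : Finset (Sym2 V)} {a b x : V} {y : V} (p : (spanGraph T).Walk x y)
    (hx : (spanGraph (T.erase s(a, b))).Reachable a x ∨
      (spanGraph (T.erase s(a, b))).Reachable b x) :
    (spanGraph (T.erase s(a, b))).Reachable a y ∨
      (spanGraph (T.erase s(a, b))).Reachable b y := by
  induction p with
  | nil => exact hx
  | @cons u v w h p ih =>
    apply ih
    by_cases he : s(u, v) = s(a, b)
    · rw [Sym2.eq_iff] at he
      rcases he with ⟨rfl, rfl⟩ | ⟨rfl, rfl⟩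
      · exact Or.inr (Reachable.refl _)
      · exact Or.inl (Reachable.refl _)
    · have h' : (spanGraph (T.erase s(a, b))).Adj u v := by
        rw [spanGraph_adj] at *
        exact ⟨Finset.mem_erase.2 ⟨he, h.1⟩, h.2⟩
      rcases hx with hx | hx
      · exact Or.inl (hx.trans h'.reachable)
      · exact Or.inr (hx.trans h'.reachable)

lemma not_reach_erase {T : Finset (Sym2 V)} (hT : (spanGraph T).IsAcyclic) {a b : V}
    (hab : (spanGraph T).Adj a b) : ¬ (spanGraph (T.erase s(a, b))).Reachable a b := by
  have h := isAcyclic_iff_forall_isBridge.1 hT ((mem_edgeSet _).2 hab)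
  rw [isBridge_iff] at h
  intro h'
  apply h
  apply h'.mono
  intro x y hxy
  rw [spanGraph_adj] at hxy
  rw [deleteEdges_adj, spanGraph_adj]
  have := Finset.mem_erase.1 hxy.1
  exact ⟨⟨this.2, hxy.2⟩, by simpa using this.1⟩

lemma swap_tree {G : SimpleGraph V} {T : Finset (Sym2 V)} (hT : IsSpanningTree G T) {a b c d : V}
    (hab : s(a, b) ∈ T) (hcd : s(c, d) ∈ G.edgeSet)
    (hac : (spanGraph (T.erase s(a, b))).Reachable a c)
    (hbd : (spanGraph (T.erase s(a, b))).Reachable b d) :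
    IsSpanningTree G (insert s(c, d) (T.erase s(a, b))) := by
  obtain ⟨hsub, hconn, hac'⟩ := hT
  have hne : a ≠ b := by
    have : G.Adj a b := hsub hab
    exact this.ne
  have hcdne : c ≠ d := by
    have : G.Adj c d := hcd
    exact this.ne
  have hab' : (spanGraph T).Adj a b := spanGraph_adj.2 ⟨hab, hne⟩
  have hnr := not_reach_erase hac' hab'
  have hle : spanGraph (T.erase s(a, b)) ≤ spanGraph (insert s(c, d) (T.erase s(a, b))) :=
    spanGraph_mono (Finset.subset_insert _ _)
  refine ⟨?_, ?_, ?_⟩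
  · intro e he
    have he' : e ∈ insert s(c, d) (T.erase s(a, b)) := he
    rw [Finset.mem_insert] at he'
    rcases he' with rfl | he'
    · exact hcd
    · exact hsub (Finset.mem_of_mem_erase he')
  · have hab2 : (spanGraph (insert s(c, d) (T.erase s(a, b)))).Reachable a b := by
      refine (hac.mono hle).trans (Reachable.trans ?_ (hbd.mono hle).symm)
      apply Adj.reachable
      rw [spanGraph_adj]
      exact ⟨Finset.mem_insert_self _ _, hcdne⟩
    rw [connected_iff_exists_forall_reachable]
    refine ⟨a, fun y => ?_⟩
    obtain ⟨p⟩ := hconn.preconnected a y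
    rcases reach_erase p (a := a) (b := b) (Or.inl (Reachable.refl _)) with h | h
    · exact h.mono hle
    · exact hab2.trans (h.mono hle)
  · have h1 : ¬ (spanGraph (T.erase s(a, b))).Reachable c d := fun h =>
      hnr (hac.trans (h.trans hbd.symm))
    have h2 : (spanGraph (T.erase s(a, b))).IsAcyclic :=
      hac'.anti (spanGraph_mono (Finset.erase_subset _ _))
    refine (h2.sup_edge_of_not_reachable h1).anti ?_
    intro x y hxy
    rw [spanGraph_adj, Finset.mem_insert] at hxy
    rw [sup_adj, spanGraph_adj, edge_adj]
    rcases hxy with ⟨h | h, hn⟩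
    · right
      rw [Sym2.eq_iff] at h
      refine ⟨?_, hn⟩
      rcases h with ⟨rfl, rfl⟩ | ⟨rfl, rfl⟩ <;> simp
    · exact Or.inl ⟨h, hn⟩

lemma crossing {T : Finset (Sym2 V)} (P : V → Prop) {u v : V} (p : (spanGraph T).Walk u v)
    (hp : p.IsTrail) (hu : P u) (hv : ¬ P v) :
    ∃ a b, s(a, b) ∈ p.edges ∧ s(a, b) ∈ T ∧ a ≠ b ∧ P a ∧ ¬ P b ∧
      (spanGraph (T.erase s(a, b))).Reachable a u ∧
      (spanGraph (T.erase s(a, b))).Reachable b v := by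
  have key : ∀ {x y : V} (q : (spanGraph T).Walk x y) (e : Sym2 V), e ∉ q.edges →
      (spanGraph (T.erase e)).Reachable x y := by
    intro x y q e he
    induction q with
    | nil => exact Reachable.refl _
    | @cons u v w h p ih =>
      rw [Walk.edges_cons, List.mem_cons, not_or] at he
      refine Reachable.trans (Adj.reachable ?_) (ih he.2)
      rw [spanGraph_adj] at *
      exact ⟨Finset.mem_erase.2 ⟨Ne.symm he.1, h.1⟩, h.2⟩
  induction p with
  | nil => exact absurd hu hv
  | @cons u x w h p ih =>
    rw [Walk.isTrail_cons] at hp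
    by_cases hx : P x
    · obtain ⟨a, b, h1, h2, h3, h4, h5, h6, h7⟩ := ih hp.1 hx hv
      refine ⟨a, b, by simp [h1], h2, h3, h4, h5, h6.trans ?_, h7⟩
      apply Adj.reachable
      rw [spanGraph_adj] at *
      refine ⟨Finset.mem_erase.2 ⟨?_, ?_⟩, h.2.symm⟩
      · intro he
        apply hp.2
        rw [Sym2.eq_swap, he]
        exact h1
      · rw [Sym2.eq_swap]; exact h.1
    · have h' := spanGraph_adj.1 h
      exact ⟨u, x, by simp, h'.1, h'.2, hu, hx, Reachable.refl _, key p _ hp.2⟩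

lemma exchange {G : SimpleGraph V} {T T' : Finset (Sym2 V)} (hT : IsSpanningTree G T)
    (hT' : IsSpanningTree G T') {e : Sym2 V} (he : e ∈ T) (he' : e ∉ T') :
    ∃ f, f ∈ T' ∧ f ∉ T ∧ IsSpanningTree G (insert f (T.erase e)) ∧
      IsSpanningTree G (insert e (T'.erase f)) := by
  induction e with
  | _ u v =>
  have huv : G.Adj u v := hT.1 he
  have hadj : (spanGraph T).Adj u v := spanGraph_adj.2 ⟨he, huv.ne⟩
  have hnr := not_reach_erase hT.2.2 hadj
  obtain ⟨p, hp⟩ := (hT'.2.1.preconnected u v).exists_isPath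
  obtain ⟨a, b, -, h2, h3, h4, h5, h6, h7⟩ :=
    crossing (fun x => (spanGraph (T.erase s(u, v))).Reachable u x) p hp.isTrail
      (Reachable.refl _) hnr
  have hfe : s(a, b) ≠ s(u, v) := fun h => he' (h ▸ h2)
  have hb : (spanGraph (T.erase s(u, v))).Reachable v b := by
    obtain ⟨q⟩ := hT.2.1.preconnected u b
    exact (reach_erase q (a := u) (b := v) (Or.inl (Reachable.refl _))).resolve_left h5
  refine ⟨s(a, b), h2, ?_, swap_tree hT he (hT'.1 h2) h4 hb, swap_tree hT' h2 huv h6 h7⟩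
  intro hf
  apply h5
  refine Reachable.trans h4 (Adj.reachable ?_)
  exact spanGraph_adj.2 ⟨Finset.mem_erase.2 ⟨hfe, hf⟩, h3⟩

lemma treeWeight_swap [Fintype V] (G : SimpleGraph V) (w : G.edgeSet → ℝ) (T : Finset (Sym2 V))
    (e f : G.edgeSet) (he : (e : Sym2 V) ∈ T) (hf : (f : Sym2 V) ∉ T) :
    treeWeight G w (insert (f : Sym2 V) (T.erase e)) = treeWeight G w T - w e + w f := by
  have hef : e ≠ f := by rintro rfl; exact hf he
  have h1 : w e = ∑ x : G.edgeSet, if x = e then w x else 0 := by simp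
  have h2 : w f = ∑ x : G.edgeSet, if x = f then w x else 0 := by simp
  rw [h1, h2]
  unfold treeWeight
  rw [← Finset.sum_sub_distrib, ← Finset.sum_add_distrib]
  refine Finset.sum_congr rfl fun x _ => ?_
  by_cases hxe : x = e
  · subst hxe
    have : (x : Sym2 V) ≠ f := fun h => hef (Subtype.ext h)
    simp [he, hef, this]
  · by_cases hxf : x = f
    · subst hxf
      simp [hf, hxe]
    · have h1 : (x : Sym2 V) ≠ f := fun h => hxf (Subtype.ext h)
      have h2 : (x : Sym2 V) ≠ e := fun h => hxe (Subtype.ext h)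
      simp [hxe, hxf, h1, h2]

/-- The event that `j` belongs to the unique minimum spanning tree. -/
def edgeEvent (G : SimpleGraph V) [Fintype V] (j : G.edgeSet) : Set (G.edgeSet → ℝ) :=
  {w | ∃ T : Finset (Sym2 V), IsSpanningTree G T ∧
    (∀ T' : Finset (Sym2 V), IsSpanningTree G T' → T' ≠ T →
      treeWeight G w T < treeWeight G w T') ∧ (j : Sym2 V) ∈ T}

/-- The event that two different spanning trees have the same weight. -/
def tieEvent (G : SimpleGraph V) [Fintype V] : Set (G.edgeSet → ℝ) :=
  {w | ∃ T T' : Finset (Sym2 V), IsSpanningTree G T ∧ IsSpanningTree G T' ∧ T ≠ T' ∧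
    treeWeight G w T = treeWeight G w T'}

lemma edgeEvent_shift [Fintype V] (G : SimpleGraph V) (j k : G.edgeSet) (hjk : j ≠ k)
    (w w' : G.edgeSet → ℝ) (hle : ∀ e, w e ≤ w' e) (hj : w' j = w j) (hw : w ∈ edgeEvent G j) :
    w' ∈ edgeEvent G j ∪ tieEvent G := by
  by_cases htie : w' ∈ tieEvent G
  · exact Or.inr htie
  left
  obtain ⟨T, hT, hmin, hjT⟩ := hw
  obtain ⟨T', hT', hmin'⟩ := Set.exists_min_image {T | IsSpanningTree G T} (treeWeight G w')
    (Set.toFinite _) ⟨T, hT⟩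
  refine ⟨T', hT', fun S hS hne => lt_of_le_of_ne (hmin' S hS) fun h =>
    htie ⟨T', S, hT', hS, hne.symm, h⟩, ?_⟩
  by_contra hjT'
  obtain ⟨f, hf', hf, h1, h2⟩ := exchange hT hT' hjT hjT'
  have hfG : f ∈ G.edgeSet := hT'.1 hf'
  have e1 := hmin _ h1 (by
    intro h
    apply hf
    rw [← h]
    exact Finset.mem_insert_self _ _)
  have e2 := hmin' _ h2
  rw [treeWeight_swap G w T j ⟨f, hfG⟩ hjT hf] at e1
  rw [treeWeight_swap G w' T' ⟨f, hfG⟩ j hf' hjT'] at e2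
  have := hle ⟨f, hfG⟩
  linarith

lemma tieEvent_null [Fintype V] (G : SimpleGraph V) : volume (tieEvent G) = 0 := by
  have hsub : tieEvent G ⊆ ⋃ q : {q : Finset (Sym2 V) × Finset (Sym2 V) //
      IsSpanningTree G q.1 ∧ IsSpanningTree G q.2 ∧ q.1 ≠ q.2},
      {w | treeWeight G w q.1.1 = treeWeight G w q.1.2} := by
    rintro w ⟨T, T', h1, h2, h3, h4⟩
    exact Set.mem_iUnion.2 ⟨⟨(T, T'), h1, h2, h3⟩, h4⟩
  refine measure_mono_null hsub (measure_iUnion_null ?_)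
  rintro ⟨⟨T, T'⟩, h1, h2, h3⟩
  let S : Submodule ℝ (G.edgeSet → ℝ) :=
    { carrier := {w | treeWeight G w T = treeWeight G w T'}
      zero_mem' := by simp [treeWeight]
      add_mem' := by
        have hadd : ∀ (a b : G.edgeSet → ℝ) (R : Finset (Sym2 V)),
            treeWeight G (a + b) R = treeWeight G a R + treeWeight G b R := by
          intro a b R
          unfold treeWeight
          rw [← Finset.sum_add_distrib]
          refine Finset.sum_congr rfl fun x _ => ?_
          split_ifs <;> simp
        intro a b ha hb
        simp only [Set.mem_setOf_eq] at *
        rw [hadd, hadd, ha, hb]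
      smul_mem' := by
        have hsmul : ∀ (c : ℝ) (b : G.edgeSet → ℝ) (R : Finset (Sym2 V)),
            treeWeight G (c • b) R = c * treeWeight G b R := by
          intro c b R
          unfold treeWeight
          rw [Finset.mul_sum]
          refine Finset.sum_congr rfl fun x _ => ?_
          split_ifs <;> simp
        intro c b hb
        simp only [Set.mem_setOf_eq] at *
        rw [hsmul, hsmul, hb] }
  change volume (S : Set (G.edgeSet → ℝ)) = 0
  refine Measure.addHaar_submodule _ S fun htop => h3 ?_
  have hw : ∀ (e : G.edgeSet) (R : Finset (Sym2 V)),
      treeWeight G (Pi.single e 1) R = if (e : Sym2 V) ∈ R then 1 else 0 := by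
    intro e R
    unfold treeWeight
    rw [Finset.sum_eq_single e]
    · simp
    · intro b _ hb
      simp [hb]
    · simp
  have hiff : ∀ e : G.edgeSet, (e : Sym2 V) ∈ T ↔ (e : Sym2 V) ∈ T' := by
    intro e
    have hm : Pi.single e (1 : ℝ) ∈ S := by rw [htop]; trivial
    have hm' : treeWeight G (Pi.single e 1) T = treeWeight G (Pi.single e 1) T' := hm
    rw [hw, hw] at hm'
    by_cases h : (e : Sym2 V) ∈ T <;> by_cases h' : (e : Sym2 V) ∈ T' <;> simp_all
  ext e
  exact ⟨fun h => (hiff ⟨e, h1.1 h⟩).1 h, fun h => (hiff ⟨e, h2.1 h⟩).2 h⟩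

lemma shiftMeasure_apply [Fintype V] (G : SimpleGraph V) (s : G.edgeSet → ℝ)
    (A : Set (G.edgeSet → ℝ)) :
    shiftMeasure G s A = volume (A ∩ Set.univ.pi fun e => Set.Icc (s e) (s e + 1)) := by
  unfold shiftMeasure
  rw [← Measure.restrict_pi_pi, Measure.restrict_apply']
  · rfl
  · exact MeasurableSet.univ_pi fun e => measurableSet_Icc

/-- Monotonicity under interval sliding: sliding the interval of the edge `k` upward by
`t` weakly increases the probability that any other edge `j` belongs to the minimum
spanning tree. -/
theorem monotonicity_interval_sliding [Fintype V] (G : SimpleGraph V) (hG : G.Connected)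
    (s : G.edgeSet → ℝ) (k j : G.edgeSet) (hjk : j ≠ k) :
    Monotone fun t : ℝ => edgeInclusionProb G (Function.update s k (s k + t)) j := by
  intro t₁ t₂ ht
  have main : shiftMeasure G (Function.update s k (s k + t₁)) (edgeEvent G j) ≤
      shiftMeasure G (Function.update s k (s k + t₂)) (edgeEvent G j) := by
    rw [shiftMeasure_apply, shiftMeasure_apply]
    set d : G.edgeSet → ℝ := Pi.single k (t₂ - t₁) with hd
    set B₂ : Set (G.edgeSet → ℝ) := Set.univ.pi fun e =>
      Set.Icc (Function.update s k (s k + t₂) e) (Function.update s k (s k + t₂) e + 1) with hB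
    calc _ ≤ volume ((fun w => w + d) ⁻¹' ((edgeEvent G j ∪ tieEvent G) ∩ B₂)) := by
          apply measure_mono
          rintro w ⟨hw, hb⟩
          refine ⟨edgeEvent_shift G j k hjk w (w + d) ?_ ?_ hw, ?_⟩
          · intro e
            by_cases he : e = k
            · subst he; simp [hd, ht]
            · simp [hd, he]
          · simp [hd, hjk]
          · rw [Set.mem_univ_pi] at hb ⊢
            intro e
            have := hb e
            by_cases he : e = k
            · subst he
              simp only [hd, Function.update_self, Set.mem_Icc, Pi.add_apply,
                Pi.single_eq_same] at this ⊢
              constructor <;> linarith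
            · simpa [hd, he] using this
      _ = volume ((edgeEvent G j ∪ tieEvent G) ∩ B₂) := measure_preimage_add_right _ _ _
      _ ≤ volume ((edgeEvent G j ∩ B₂) ∪ tieEvent G) := by
          apply measure_mono
          rintro w ⟨h | h, hb⟩
          · exact Or.inl ⟨h, hb⟩
          · exact Or.inr h
      _ ≤ volume (edgeEvent G j ∩ B₂) + volume (tieEvent G) := measure_union_le _ _
      _ = volume (edgeEvent G j ∩ B₂) := by rw [tieEvent_null, add_zero]
  refine ENNReal.toReal_mono ?_ main
  rw [shiftMeasure_apply]
  refine ne_top_of_le_ne_top ?_ (measure_mono Set.inter_subset_right)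
  exact (isCompact_univ_pi fun e => isCompact_Icc).measure_lt_top.ne

end RST
end
end

section
/- Let n ≥ 4. For every shift vector s : E(K_n) → ℝ, the shifted-interval MST distribution M_s on spanning trees of K_n is not uniform: there exist spanning trees T, T' of K_n with P_{M_s}(T) ≠ P_{M_s}(T'). -/
open MeasureTheory SimpleGraph
open scoped Classical

noncomputable section

namespace RST

variable {V : Type*}

/-! ### Auxiliary material -/

section aux

variable [Fintype V]

/-- Extension of edge weights by zero. -/
def extW (w : (⊤ : SimpleGraph V).edgeSet → ℝ) (x : Sym2 V) : ℝ :=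
  if h : x ∈ (⊤ : SimpleGraph V).edgeSet then w ⟨x, h⟩ else 0

lemma treeWeight_eq (w : (⊤ : SimpleGraph V).edgeSet → ℝ) (T : Finset (Sym2 V))
    (hT : ↑T ⊆ (⊤ : SimpleGraph V).edgeSet) :
    treeWeight ⊤ w T = ∑ x ∈ T, extW w x := by
  unfold treeWeight
  rw [← Finset.sum_filter]
  refine Finset.sum_bij (fun e _ => (e : Sym2 V)) ?_ ?_ ?_ ?_
  · intro e he
    simpa using he
  · intro e _ f _ h
    exact Subtype.ext h
  · intro x hx
    exact ⟨⟨x, hT hx⟩, by simpa using hx, rfl⟩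
  · intro e _
    simp only [extW, Subtype.coe_eta, dif_pos e.2]

/-- `p` is a parent function of a tree rooted at `c`. -/
def IsPar (c : V) (p : V → V) : Prop := ∃ r : V → ℕ, ∀ a, a ≠ c → r (p a) < r a

/-- The tree of a parent function. -/
def ptree (c : V) (p : V → V) : Finset (Sym2 V) :=
  (Finset.univ.erase c).image (fun a => s(a, p a))

lemma mem_ptree {c : V} {p : V → V} {x : Sym2 V} :
    x ∈ ptree c p ↔ ∃ a, a ≠ c ∧ s(a, p a) = x := by
  simp [ptree]

lemma IsPar.injOn {c : V} {p : V → V} (h : IsPar c p) :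
    Set.InjOn (fun a => s(a, p a)) (↑((Finset.univ : Finset V).erase c) : Set V) := by
  obtain ⟨r, hr⟩ := h
  intro a ha b hb hab
  simp only [Finset.coe_erase, Finset.coe_univ, Set.mem_diff, Set.mem_univ,
    Set.mem_singleton_iff, true_and] at ha hb
  have h1 := hr a ha
  have h2 := hr b hb
  simp only [Sym2.eq_iff] at hab
  rcases hab with h | ⟨h, h'⟩
  · exact h.1
  · rw [h'] at h1
    rw [← h] at h2
    omega

lemma IsPar.ne {c : V} {p : V → V} (h : IsPar c p) {a : V} (ha : a ≠ c) : a ≠ p a := by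
  obtain ⟨r, hr⟩ := h
  intro h
  have := hr a ha
  rw [← h] at this
  omega

lemma IsPar.sub {c : V} {p : V → V} (h : IsPar c p) :
    ↑(ptree c p) ⊆ (⊤ : SimpleGraph V).edgeSet := by
  intro x hx
  rw [Finset.mem_coe, mem_ptree] at hx
  obtain ⟨a, ha, rfl⟩ := hx
  simpa using h.ne ha

lemma IsPar.card {c : V} {p : V → V} (h : IsPar c p) :
    (ptree c p).card + 1 = Fintype.card V := by
  rw [ptree, Finset.card_image_of_injOn h.injOn, Finset.card_erase_of_mem (Finset.mem_univ _),
    Finset.card_univ]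
  have : 0 < Fintype.card V := Fintype.card_pos_iff.mpr ⟨c⟩
  omega

lemma spanGraph_edgeSet (T : Finset (Sym2 V)) (hT : ↑T ⊆ (⊤ : SimpleGraph V).edgeSet) :
    (spanGraph T).edgeSet = ↑T := by
  rw [spanGraph, SimpleGraph.edgeSet_fromEdgeSet]
  ext x
  constructor
  · exact fun h => h.1
  · intro h
    refine ⟨h, ?_⟩
    have := hT h
    simpa [SimpleGraph.edgeSet_top] using this

lemma IsPar.isSpanningTree {c : V} {p : V → V} (h : IsPar c p) :
    IsSpanningTree (⊤ : SimpleGraph V) (ptree c p) := by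
  have key : (spanGraph (ptree c p)).IsTree := by
    rw [SimpleGraph.isTree_iff_connected_and_card]
    constructor
    · rw [SimpleGraph.connected_iff_exists_forall_reachable]
      refine ⟨c, ?_⟩
      have h' := h
      obtain ⟨r, hr⟩ := h
      have : ∀ k, ∀ a, r a = k → (spanGraph (ptree c p)).Reachable c a := by
        intro k
        induction k using Nat.strong_induction_on with
        | _ k ih =>
          intro a hak
          by_cases ha : a = c
          · subst ha; exact SimpleGraph.Reachable.refl _
          · refine (ih (r (p a)) (by have := hr a ha; omega) (p a) rfl).trans ?_
            apply SimpleGraph.Adj.reachable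
            rw [spanGraph, SimpleGraph.fromEdgeSet_adj]
            refine ⟨?_, (h'.ne ha).symm⟩
            rw [Finset.mem_coe, mem_ptree]
            exact ⟨a, ha, Sym2.eq_swap⟩
      exact fun a => this _ a rfl
    · rw [spanGraph_edgeSet _ h.sub]
      simpa using h.card
  exact ⟨h.sub, key.1, key.2⟩

lemma exists_par (c : V) {T : Finset (Sym2 V)} (hT : IsSpanningTree (⊤ : SimpleGraph V) T) :
    ∃ p, IsPar c p ∧ T = ptree c p := by
  obtain ⟨h1, h2, h3⟩ := hT
  have key : ∀ a, ∃ b, a ≠ c → s(a, b) ∈ T ∧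
      (spanGraph T).dist b c < (spanGraph T).dist a c := by
    intro a
    by_cases ha : a = c
    · exact ⟨c, fun h => absurd ha h⟩
    · obtain ⟨q, hq⟩ := h2.exists_walk_length_eq_dist a c
      cases q with
      | nil => exact absurd rfl ha
      | @cons _ b _ hab q =>
        refine ⟨b, fun _ => ⟨?_, ?_⟩⟩
        · rw [spanGraph, SimpleGraph.fromEdgeSet_adj] at hab
          exact hab.1
        · have := SimpleGraph.dist_le q
          rw [← hq, SimpleGraph.Walk.length_cons]
          omega
  choose p hp using key
  have hpar : IsPar c p := ⟨fun a => (spanGraph T).dist a c, fun a ha => (hp a ha).2⟩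
  refine ⟨p, hpar, ?_⟩
  symm
  apply Finset.eq_of_subset_of_card_le
  · intro x hx
    rw [mem_ptree] at hx
    obtain ⟨a, ha, rfl⟩ := hx
    exact (hp a ha).1
  · have htree : (spanGraph T).IsTree := ⟨h2, h3⟩
    rw [SimpleGraph.isTree_iff_connected_and_card, spanGraph_edgeSet _ h1] at htree
    have h4 := htree.2
    simp at h4
    have := hpar.card
    omega

lemma IsPar.weight {c : V} {p : V → V} (h : IsPar c p)
    (w : (⊤ : SimpleGraph V).edgeSet → ℝ) :
    treeWeight ⊤ w (ptree c p) = ∑ a ∈ Finset.univ.erase c, extW w s(a, p a) := by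
  rw [treeWeight_eq _ _ h.sub, ptree, Finset.sum_image h.injOn]

lemma star_mem {c : V} {w : (⊤ : SimpleGraph V).edgeSet → ℝ}
    (h : ∀ a b, a ≠ c → b ≠ c → a ≠ b → extW w s(a, c) < extW w s(a, b)) :
    w ∈ mstEvent ⊤ (ptree c (fun _ => c)) := by
  have hs : IsPar c (fun _ : V => c) := ⟨fun a => if a = c then 0 else 1, by
    intro a ha; simp [ha]⟩
  refine ⟨hs.isSpanningTree, ?_⟩
  intro T' hT' hne
  obtain ⟨p, hp, rfl⟩ := exists_par c hT'
  rw [hs.weight, hp.weight]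
  have hex : ∃ a, a ≠ c ∧ p a ≠ c := by
    by_contra hcon
    push Not at hcon
    apply hne
    unfold ptree
    apply Finset.image_congr
    intro a ha
    simp only [Finset.coe_erase, Finset.coe_univ, Set.mem_diff, Set.mem_univ,
      Set.mem_singleton_iff, true_and] at ha
    simp [hcon a ha]
  obtain ⟨a, ha, hpa⟩ := hex
  apply Finset.sum_lt_sum
  · intro b hb
    have hb : b ≠ c := by simpa using hb
    by_cases hpb : p b = c
    · rw [hpb]
    · exact (h b (p b) hb hpb (hp.ne hb)).le
  · exact ⟨a, by simpa using ha, h a (p a) ha hpa (hp.ne ha)⟩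

lemma isPar_of {c : V} {p : V → V} (h0 : p c = c) (h : ∀ a, p (p (p a)) = c) : IsPar c p := by
  refine ⟨fun a => if a = c then 0 else if p a = c then 1 else if p (p a) = c then 2 else 3, ?_⟩
  intro a ha
  have := h a
  simp only [ha, if_false]
  split_ifs <;> simp_all

lemma mst_lt {c : V} {p q : V → V} {w : (⊤ : SimpleGraph V).edgeSet → ℝ}
    (hw : w ∈ mstEvent ⊤ (ptree c p)) (hp : IsPar c p) (hq : IsPar c q)
    (hne : ptree c q ≠ ptree c p) :
    ∑ a ∈ Finset.univ.erase c, extW w s(a, p a) < ∑ a ∈ Finset.univ.erase c, extW w s(a, q a) := by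
  rw [← hp.weight, ← hq.weight]
  exact hw.2 _ hq.isSpanningTree hne

lemma ex1 {c : V} {p : V → V} {w : (⊤ : SimpleGraph V).edgeSet → ℝ}
    (hw : w ∈ mstEvent ⊤ (ptree c p)) (hp : IsPar c p) {a x : V} (ha : a ≠ c)
    (hq : IsPar c (Function.update p a x)) (hx : s(a, x) ∉ ptree c p) :
    extW w s(a, p a) < extW w s(a, x) := by
  have h := mst_lt hw hp hq (by
    intro h
    apply hx
    rw [← h, mem_ptree]
    exact ⟨a, ha, by simp⟩)
  have hmem : a ∈ (Finset.univ : Finset V).erase c := by simpa using ha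
  rw [← Finset.add_sum_erase _ _ hmem, ← Finset.add_sum_erase _ _ hmem] at h
  have : ∑ b ∈ (Finset.univ.erase c).erase a, extW w s(b, Function.update p a x b)
      = ∑ b ∈ (Finset.univ.erase c).erase a, extW w s(b, p b) := by
    apply Finset.sum_congr rfl
    intro b hb
    rw [Function.update_of_ne (Finset.ne_of_mem_erase hb)]
  rw [this, Function.update_self] at h
  linarith

lemma ex2 {c : V} {p : V → V} {w : (⊤ : SimpleGraph V).edgeSet → ℝ}
    (hw : w ∈ mstEvent ⊤ (ptree c p)) (hp : IsPar c p) {a x a' x' : V} (ha : a ≠ c) (ha' : a' ≠ c)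
    (haa : a ≠ a')
    (hq : IsPar c (Function.update (Function.update p a' x') a x)) (hx : s(a, x) ∉ ptree c p) :
    extW w s(a, p a) + extW w s(a', p a') < extW w s(a, x) + extW w s(a', x') := by
  have h := mst_lt hw hp hq (by
    intro h
    apply hx
    rw [← h, mem_ptree]
    exact ⟨a, ha, by simp⟩)
  have hmem : a ∈ (Finset.univ : Finset V).erase c := by simpa using ha
  have hmem' : a' ∈ ((Finset.univ : Finset V).erase c).erase a := by simp [ha', haa.symm]
  rw [← Finset.add_sum_erase _ _ hmem, ← Finset.add_sum_erase _ _ hmem,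
    ← Finset.add_sum_erase _ _ hmem', ← Finset.add_sum_erase _ _ hmem'] at h
  have : ∑ b ∈ ((Finset.univ.erase c).erase a).erase a',
        extW w s(b, Function.update (Function.update p a' x') a x b)
      = ∑ b ∈ ((Finset.univ.erase c).erase a).erase a', extW w s(b, p b) := by
    apply Finset.sum_congr rfl
    intro b hb
    rw [Function.update_of_ne (Finset.ne_of_mem_erase (Finset.mem_of_mem_erase hb)),
      Function.update_of_ne (Finset.ne_of_mem_erase hb)]
  rw [this, Function.update_self, Function.update_of_ne haa.symm, Function.update_self] at h
  linarith

/-- Star at `c` with the leaf `b` moved to `d`. -/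
def modP (c b d : V) : V → V := Function.update (fun _ => c) b d

lemma isPar_star (c : V) : IsPar c (fun _ : V => c) := isPar_of rfl fun _ => rfl

lemma isPar_modP {c b d : V} (hbc : b ≠ c) (hbd : b ≠ d) : IsPar c (modP c b d) := by
  apply isPar_of
  · simp [modP, Function.update_apply, hbc.symm]
  · intro a
    simp only [modP, Function.update_apply]
    grind

lemma star_nec {c : V} {w : (⊤ : SimpleGraph V).edgeSet → ℝ}
    (hw : w ∈ mstEvent ⊤ (ptree c (fun _ => c))) {a b : V} (ha : a ≠ c) (hb : b ≠ c)
    (hab : a ≠ b) : extW w s(a, c) < extW w s(a, b) := by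
  refine ex1 hw (isPar_star c) ha (isPar_modP ha hab) ?_
  rw [mem_ptree]
  rintro ⟨v, hv, h⟩
  simp only [Sym2.eq_iff] at h
  grind


lemma not_mem_modP {c b d : V} {x y : V} (hx : x ≠ c) (hy : y ≠ c)
    (h : ¬ (x = b ∧ y = d)) (h' : ¬ (x = d ∧ y = b)) :
    s(x, y) ∉ ptree c (modP c b d) := by
  rw [mem_ptree]
  rintro ⟨v, hv, h⟩
  simp only [Sym2.eq_iff, modP, Function.update_apply] at h
  grind

lemma not_mem_modP' {c b d : V} (hbc : b ≠ c) (hbd : b ≠ d) (hcd : c ≠ d) :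
    s(b, c) ∉ ptree c (modP c b d) := by
  rw [mem_ptree]
  rintro ⟨v, hv, h⟩
  simp only [Sym2.eq_iff, modP, Function.update_apply] at h
  grind

lemma nec1 {c b d : V} {w : (⊤ : SimpleGraph V).edgeSet → ℝ}
    (hw : w ∈ mstEvent ⊤ (ptree c (modP c b d))) (hbc : b ≠ c) (hbd : b ≠ d) (hcd : c ≠ d) : extW w s(b, d) < extW w s(b, c) := by
  have := ex1 hw (isPar_modP hbc hbd) (a := b) (x := c) hbc ?_ (not_mem_modP' hbc hbd hcd)
  · simpa [modP] using this
  · apply isPar_of <;> simp only [modP, Function.update_apply] <;> grind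

lemma nec2 {c b d : V} {w : (⊤ : SimpleGraph V).edgeSet → ℝ}
    (hw : w ∈ mstEvent ⊤ (ptree c (modP c b d))) (hbc : b ≠ c) (hbd : b ≠ d) (hcd : c ≠ d)
    {x : V} (hxb : x ≠ b) (hxd : x ≠ d) : extW w s(d, c) < extW w s(b, x) := by
  have := ex2 hw (isPar_modP hbc hbd) (a := b) (x := x) (a' := d) (x' := b) hbc hcd.symm hbd ?_ ?_
  · simp only [modP, Function.update_self, Function.update_of_ne hbd.symm] at this
    rw [Sym2.eq_swap (a := d) (b := b)] at this
    linarith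
  · apply isPar_of <;> simp only [modP, Function.update_apply] <;> grind
  · by_cases hx : x = c
    · subst hx; exact not_mem_modP' hbc hbd hcd
    · apply not_mem_modP hbc hx <;> grind

lemma nec3 {c b d : V} {w : (⊤ : SimpleGraph V).edgeSet → ℝ}
    (hw : w ∈ mstEvent ⊤ (ptree c (modP c b d))) (hbc : b ≠ c) (hbd : b ≠ d) (hcd : c ≠ d)
    {x : V} (hxc : x ≠ c) (hxb : x ≠ b) (hxd : x ≠ d) :
    extW w s(b, d) < extW w s(b, x) := by
  have := ex1 hw (isPar_modP hbc hbd) (a := b) (x := x) hbc ?_ ?_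
  · simpa [modP] using this
  · apply isPar_of <;> simp only [modP, Function.update_apply] <;> grind
  · apply not_mem_modP hbc hxc <;> grind

lemma nec4 {c b d : V} {w : (⊤ : SimpleGraph V).edgeSet → ℝ}
    (hw : w ∈ mstEvent ⊤ (ptree c (modP c b d))) (hbc : b ≠ c) (hbd : b ≠ d) (hcd : c ≠ d)
    {x y : V} (hxc : x ≠ c) (hxb : x ≠ b) (hyc : y ≠ c) (hxy : x ≠ y)
    (h : ¬ (x = d ∧ y = b)) :
    extW w s(x, c) < extW w s(x, y) := by
  have := ex1 hw (isPar_modP hbc hbd) (a := x) (x := y) hxc ?_ ?_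
  · simpa [modP, Function.update_of_ne hxb] using this
  · apply isPar_of <;> simp only [modP, Function.update_apply] <;> grind
  · apply not_mem_modP hxc hyc <;> grind


/-! ### Measure theory -/

section meas

variable (G : SimpleGraph V)

/-- Lebesgue measure on the space of weights. -/
def vol : Measure (G.edgeSet → ℝ) := volume

/-- The box on which the shifted measure lives. -/
def box (s : G.edgeSet → ℝ) : Set (G.edgeSet → ℝ) :=
  Set.univ.pi fun e => Set.Icc (s e) (s e + 1)

lemma shift_apply (s : G.edgeSet → ℝ) (A : Set (G.edgeSet → ℝ)) :
    shiftMeasure G s A = vol G (A ∩ box G s) := by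
  unfold shiftMeasure
  rw [← Measure.restrict_pi_pi]
  rw [Measure.restrict_apply' (MeasurableSet.univ_pi fun _ => measurableSet_Icc)]
  rfl

lemma vol_box (s : G.edgeSet → ℝ) : vol G (box G s) = 1 := by
  unfold vol box
  rw [volume_pi_pi]
  simp

lemma vol_Ioo_pos (lo hi : G.edgeSet → ℝ) (h : ∀ e, lo e < hi e) :
    0 < vol G (Set.univ.pi fun e => Set.Ioo (lo e) (hi e)) := by
  unfold vol
  rw [volume_pi_pi, pos_iff_ne_zero, Finset.prod_ne_zero_iff]
  intro e _
  simpa using h e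

lemma vol_perm (σ : Equiv.Perm G.edgeSet) (A : Set (G.edgeSet → ℝ)) :
    vol G {w | w ∘ σ ∈ A} = vol G A := by
  unfold vol
  rw [← (volume_measurePreserving_piCongrLeft (fun _ : G.edgeSet => ℝ) σ.symm).measure_preimage_equiv A]
  congr 1
  ext w
  simp only [Set.mem_setOf_eq, Set.mem_preimage]
  have : w ∘ σ = MeasurableEquiv.piCongrLeft (fun _ : G.edgeSet => ℝ) σ.symm w := by
    funext e
    have := MeasurableEquiv.piCongrLeft_apply_apply (β := fun _ : G.edgeSet => ℝ) σ.symm w (σ e)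
    simpa using this.symm
  rw [this]

lemma vol_tie {T T' : Finset (Sym2 V)} (hT : ↑T ⊆ G.edgeSet) (hT' : ↑T' ⊆ G.edgeSet)
    (hne : T ≠ T') : vol G {w | treeWeight G w T = treeWeight G w T'} = 0 := by
  let S : Submodule ℝ (G.edgeSet → ℝ) :=
    { carrier := {w | treeWeight G w T = treeWeight G w T'}
      add_mem' := by
        intro x y hx hy
        have hadd : ∀ T, treeWeight G (x + y) T = treeWeight G x T + treeWeight G y T := by
          intro T
          unfold treeWeight
          rw [← Finset.sum_add_distrib]
          apply Finset.sum_congr rfl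
          intro e _
          split_ifs <;> simp
        simp only [Set.mem_setOf_eq] at hx hy ⊢
        rw [hadd, hadd, hx, hy]
      zero_mem' := by simp [treeWeight]
      smul_mem' := by
        intro r x hx
        have hmul : ∀ T, treeWeight G (r • x) T = r * treeWeight G x T := by
          intro T
          unfold treeWeight
          rw [Finset.mul_sum]
          apply Finset.sum_congr rfl
          intro e _
          split_ifs <;> simp
        simp only [Set.mem_setOf_eq] at hx ⊢
        rw [hmul, hmul, hx] }
  have hS : S ≠ ⊤ := by
    intro htop
    apply hne
    have hind : ∀ (e : G.edgeSet) (T : Finset (Sym2 V)),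
        treeWeight G (Pi.single e 1) T = if (e : Sym2 V) ∈ T then 1 else 0 := by
      intro e T
      unfold treeWeight
      rw [Finset.sum_eq_single e]
      · simp
      · intro f _ hf
        simp [Pi.single_eq_of_ne hf]
      · simp
    have hiff : ∀ e : G.edgeSet, (e : Sym2 V) ∈ T ↔ (e : Sym2 V) ∈ T' := by
      intro e
      have hmem : Pi.single e 1 ∈ S := by rw [htop]; trivial
      have heq : treeWeight G (Pi.single e 1) T = treeWeight G (Pi.single e 1) T' := hmem
      rw [hind, hind] at heq
      split_ifs at heq <;> simp_all
    ext x
    constructor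
    · intro hx; exact (hiff ⟨x, hT hx⟩).1 hx
    · intro hx; exact (hiff ⟨x, hT' hx⟩).2 hx
  exact Measure.addHaar_submodule volume S hS

lemma exists_pos_s14 (s : G.edgeSet → ℝ) (hex : ∃ T, IsSpanningTree G T) :
    ∃ T, IsSpanningTree G T ∧ shiftMeasure G s (mstEvent G T) ≠ 0 := by
  by_contra hcon
  push Not at hcon
  have hcover : box G s ⊆
      (⋃ T : {T : Finset (Sym2 V) // IsSpanningTree G T}, mstEvent G T.1 ∩ box G s) ∪
      (⋃ q : {q : Finset (Sym2 V) × Finset (Sym2 V) //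
          IsSpanningTree G q.1 ∧ IsSpanningTree G q.2 ∧ q.1 ≠ q.2},
        {w | treeWeight G w q.1.1 = treeWeight G w q.1.2}) := by
    intro w hw
    obtain ⟨T0, hT0⟩ := hex
    haveI : Nonempty {T : Finset (Sym2 V) // IsSpanningTree G T} := ⟨⟨T0, hT0⟩⟩
    obtain ⟨T, hT⟩ := Finite.exists_min
      (fun T : {T : Finset (Sym2 V) // IsSpanningTree G T} => treeWeight G w T.1)
    by_cases htie : ∃ T', IsSpanningTree G T' ∧ T' ≠ T.1 ∧ treeWeight G w T' = treeWeight G w T.1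
    · obtain ⟨T', h1, h2, h3⟩ := htie
      right
      exact Set.mem_iUnion.2 ⟨⟨(T', T.1), h1, T.2, h2⟩, h3⟩
    · left
      refine Set.mem_iUnion.2 ⟨T, ⟨T.2, ?_⟩, hw⟩
      intro T' h1 h2
      refine lt_of_le_of_ne (hT ⟨T', h1⟩) ?_
      intro h3
      exact htie ⟨T', h1, h2, h3.symm⟩
  have h0 : vol G (box G s) = 0 := by
    refine measure_mono_null hcover (measure_union_null ?_ ?_)
    · rw [measure_iUnion_null_iff]
      intro T
      rw [← shift_apply]
      exact hcon T.1 T.2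
    · rw [measure_iUnion_null_iff]
      intro q
      exact vol_tie G q.2.1.1 q.2.2.1.1 q.2.2.2
  rw [vol_box] at h0
  exact one_ne_zero h0

end meas

lemma extW_swap (w : (⊤ : SimpleGraph V).edgeSet → ℝ) (e f : (⊤ : SimpleGraph V).edgeSet)
    (x : Sym2 V) : extW (w ∘ Equiv.swap e f) x = extW w (Equiv.swap e.1 f.1 x) := by
  by_cases hx : x ∈ (⊤ : SimpleGraph V).edgeSet
  · have h1 : extW (w ∘ Equiv.swap e f) x = w (Equiv.swap e f ⟨x, hx⟩) := by
      simp only [extW, dif_pos hx, Function.comp]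
    have h2 : (Equiv.swap e.1 f.1 x) = (Equiv.swap e f ⟨x, hx⟩ : (⊤ : SimpleGraph V).edgeSet).1 := by
      simp only [Equiv.swap_apply_def, Subtype.ext_iff]
      split_ifs <;> rfl
    rw [h1, h2, extW, dif_pos (Subtype.coe_prop _)]
  · have h1 : Equiv.swap e.1 f.1 x = x := by
      apply Equiv.swap_apply_of_ne_of_ne
      · rintro rfl; exact hx e.2
      · rintro rfl; exact hx f.2
    rw [h1, extW, extW, dif_neg hx, dif_neg hx]

lemma extW_coe (w : (⊤ : SimpleGraph V).edgeSet → ℝ) (e : (⊤ : SimpleGraph V).edgeSet) :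
    extW w e.1 = w e := by
  simp only [extW, dif_pos e.2]

lemma mem_edge {a b : V} (h : a ≠ b) : s(a, b) ∈ (⊤ : SimpleGraph V).edgeSet := by
  simpa using h

/-- Levels of the edges used for the strict inequality. -/
def lev (a b c d : V) (x : Sym2 V) : ℕ :=
  if x = s(d, c) then 2 else if x = s(b, a) then 1 else if c ∈ x then 0 else 3

lemma star_lt {s : (⊤ : SimpleGraph V).edgeSet → ℝ} {a b c d : V}
    (hab : a ≠ b) (hac : a ≠ c) (had : a ≠ d) (hbc : b ≠ c) (hbd : b ≠ d) (hcd : c ≠ d)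
    (hs : s ⟨s(b, c), mem_edge hbc⟩ ≤ s ⟨s(b, d), mem_edge hbd⟩)
    (hov : ∀ e f, s e < s f + 1) :
    shiftMeasure ⊤ s (mstEvent ⊤ (ptree c (modP c b d))) <
      shiftMeasure ⊤ s (mstEvent ⊤ (ptree c (fun _ => c))) := by
  rw [shift_apply, shift_apply]
  set e : (⊤ : SimpleGraph V).edgeSet := ⟨s(b, c), mem_edge hbc⟩ with he
  set f : (⊤ : SimpleGraph V).edgeSet := ⟨s(b, d), mem_edge hbd⟩ with hf
  have hef : e ≠ f := by
    intro h
    have := congrArg Subtype.val h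
    simp only [he, hf, Sym2.eq_iff] at this
    grind
  haveI : Nonempty (⊤ : SimpleGraph V).edgeSet := ⟨e⟩
  obtain ⟨e0, he0⟩ := Finite.exists_max s
  obtain ⟨e1, he1⟩ := Finite.exists_min s
  obtain ⟨δ, hδ⟩ : ∃ δ, δ = (s e1 + 1 - s e0) / 4 := ⟨_, rfl⟩
  have hδ0 : 0 < δ := by have := hov e0 e1; rw [hδ]; linarith
  set A : Set ((⊤ : SimpleGraph V).edgeSet → ℝ) :=
    {w | w ∘ Equiv.swap e f ∈ mstEvent ⊤ (ptree c (modP c b d)) ∩ box ⊤ s} with hA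
  set U : Set ((⊤ : SimpleGraph V).edgeSet → ℝ) :=
    Set.univ.pi fun x => Set.Ioo (s e0 + lev a b c d x.1 * δ) (s e0 + (lev a b c d x.1 + 1) * δ)
    with hU
  have hUpos : 0 < vol ⊤ U := by
    apply vol_Ioo_pos
    intro x
    linarith
  have hUmeas : MeasurableSet U := MeasurableSet.univ_pi fun _ => measurableSet_Ioo
  have hUlev : ∀ w ∈ U, ∀ x y : Sym2 V, x ∈ (⊤ : SimpleGraph V).edgeSet →
      y ∈ (⊤ : SimpleGraph V).edgeSet → lev a b c d x < lev a b c d y → extW w x < extW w y := by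
    intro w hw x y hx hy hl
    have h1 := (hw ⟨x, hx⟩ trivial).2
    have h2 := (hw ⟨y, hy⟩ trivial).1
    rw [extW, extW, dif_pos hx, dif_pos hy]
    have h3 : ((lev a b c d x : ℝ) + 1) ≤ lev a b c d y := by exact_mod_cast hl
    have := mul_le_mul_of_nonneg_right h3 hδ0.le
    simp only at h1 h2
    linarith
  have hUstar : U ⊆ mstEvent ⊤ (ptree c (fun _ => c)) ∩ box ⊤ s := by
    intro w hw
    refine ⟨star_mem ?_, ?_⟩
    · intro u v hu hv huv
      apply hUlev w hw _ _ (mem_edge hu) (mem_edge huv)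
      simp only [lev, Sym2.eq_iff, Sym2.mem_iff]
      grind
    · intro x _
      have h1 := (hw x trivial).1
      have h2 := (hw x trivial).2
      have h3 : (lev a b c d x.1 : ℝ) ≤ 3 := by
        have : lev a b c d x.1 ≤ 3 := by unfold lev; split_ifs <;> omega
        exact_mod_cast this
      have h4 : (0 : ℝ) ≤ lev a b c d x.1 := Nat.cast_nonneg _
      have h5 := he0 x
      have h6 := he1 x
      have h7 := mul_le_mul_of_nonneg_right h3 hδ0.le
      have h8 := mul_nonneg h4 hδ0.le
      constructor <;> linarith
  have hdisj : Disjoint A U := by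
    rw [Set.disjoint_left]
    intro w hwA hwU
    have h1 := nec2 hwA.1 hbc hbd hcd hab had
    rw [extW_swap, extW_swap, Equiv.swap_apply_of_ne_of_ne, Equiv.swap_apply_of_ne_of_ne] at h1
    · have h2 := hUlev w hwU s(b, a) s(d, c) (mem_edge hab.symm) (mem_edge hcd.symm) (by
        simp only [lev, Sym2.eq_iff, Sym2.mem_iff]
        grind)
      linarith
    all_goals
      simp only [he, hf, ne_eq, Sym2.eq_iff]
      grind
  have hAstar : A ⊆ mstEvent ⊤ (ptree c (fun _ => c)) ∩ box ⊤ s := by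
    intro w hwA
    obtain ⟨v, hv⟩ : ∃ v, v = w ∘ Equiv.swap e f := ⟨_, rfl⟩
    have hwv : w = v ∘ Equiv.swap e f := by
      rw [hv]; funext x; simp
    have hve : v ∈ mstEvent ⊤ (ptree c (modP c b d)) := by rw [hv]; exact hwA.1
    have hvb : v ∈ box ⊤ s := by rw [hv]; exact hwA.2
    clear hv hwA
    subst hwv
    have h1 := nec1 hve hbc hbd hcd
    refine ⟨star_mem ?_, ?_⟩
    · have hsw1 : Equiv.swap e.1 f.1 s(b, c) = s(b, d) := Equiv.swap_apply_left _ _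
      have hsw2 : Equiv.swap e.1 f.1 s(b, d) = s(b, c) := Equiv.swap_apply_right _ _
      have hsw3 : ∀ x, x ≠ s(b, c) → x ≠ s(b, d) → Equiv.swap e.1 f.1 x = x :=
        fun x h h' => Equiv.swap_apply_of_ne_of_ne h h'
      intro x y hx hy hxy
      rw [extW_swap, extW_swap]
      by_cases hxb : x = b
      · subst hxb
        rw [hsw1]
        by_cases hyd : y = d
        · subst hyd
          rw [hsw2]
          exact h1
        · rw [hsw3 _ (by simp only [ne_eq, Sym2.eq_iff]; grind)
            (by simp only [ne_eq, Sym2.eq_iff]; grind)]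
          exact nec3 hve hbc hbd hcd hy hxy.symm hyd
      · rw [hsw3 s(x, c) (by simp only [ne_eq, Sym2.eq_iff]; grind)
            (by simp only [ne_eq, Sym2.eq_iff]; grind)]
        by_cases hxy2 : x = d ∧ y = b
        · obtain ⟨rfl, rfl⟩ := hxy2
          rw [Sym2.eq_swap (a := x) (b := y), hsw2]
          exact nec2 hve hbc hbd hcd hbc.symm hcd
        · rw [hsw3 s(x, y) (by simp only [ne_eq, Sym2.eq_iff]; grind)
            (by simp only [ne_eq, Sym2.eq_iff]; grind)]
          exact nec4 hve hbc hbd hcd hx hxb hy hxy hxy2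
    · have h2 : v f < v e := by
        rw [← extW_coe v f, ← extW_coe v e]; exact h1
      have h3 := hvb e trivial
      have h4 := hvb f trivial
      simp only [Set.mem_Icc] at h3 h4
      intro x _
      simp only [Function.comp, Set.mem_Icc]
      by_cases hxe : x = e
      · subst hxe
        rw [Equiv.swap_apply_left]
        constructor <;> linarith
      · by_cases hxf : x = f
        · rw [hxf, Equiv.swap_apply_right]
          constructor <;> linarith
        · rw [Equiv.swap_apply_of_ne_of_ne hxe hxf]
          exact hvb x trivial
  have hvA : vol ⊤ A = vol ⊤ (mstEvent ⊤ (ptree c (modP c b d)) ∩ box ⊤ s) := vol_perm _ _ _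
  have hfin : vol ⊤ A ≠ ⊤ := by
    rw [hvA]
    refine ne_top_of_le_ne_top ENNReal.one_ne_top ?_
    rw [← vol_box ⊤ s]
    exact measure_mono Set.inter_subset_right
  calc vol ⊤ (mstEvent ⊤ (ptree c (modP c b d)) ∩ box ⊤ s) = vol ⊤ A := hvA.symm
    _ < vol ⊤ A + vol ⊤ U := ENNReal.lt_add_right hfin hUpos.ne'
    _ = vol ⊤ (A ∪ U) := (measure_union hdisj hUmeas).symm
    _ ≤ _ := measure_mono (Set.union_subset hAstar hUstar)

lemma overlap {s : (⊤ : SimpleGraph V).edgeSet → ℝ}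
    (hpos : ∀ T, IsSpanningTree (⊤ : SimpleGraph V) T → shiftMeasure ⊤ s (mstEvent ⊤ T) ≠ 0)
    (e f : (⊤ : SimpleGraph V).edgeSet) : s e < s f + 1 := by
  have hw : ∀ T, IsSpanningTree (⊤ : SimpleGraph V) T → ∃ w, w ∈ mstEvent ⊤ T ∧ w ∈ box ⊤ s := by
    intro T hT
    have h := hpos T hT
    rw [shift_apply] at h
    exact nonempty_of_measure_ne_zero h
  have hfinish : ∀ w ∈ box ⊤ s, w e < w f → s e < s f + 1 := by
    intro w hw h
    have h1 := (hw e trivial).1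
    have h2 := (hw f trivial).2
    linarith
  -- adjacent edges
  have hadj : ∀ c x y : V, c ≠ x → x ≠ y → c ≠ y → e.1 = s(x, c) → f.1 = s(x, y) →
      s e < s f + 1 := by
    intro c x y hcx hxy hcy h1 h2
    obtain ⟨w, hwm, hwb⟩ := hw _ (isPar_star c).isSpanningTree
    apply hfinish w hwb
    rw [← extW_coe w e, ← extW_coe w f, h1, h2]
    exact star_nec hwm hcx.symm hcy.symm hxy
  obtain ⟨e, he⟩ := e
  obtain ⟨f, hf⟩ := f
  induction e using Sym2.ind with
  | _ x y =>
  induction f using Sym2.ind with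
  | _ u v =>
  have hxy : x ≠ y := by simpa using he
  have huv : u ≠ v := by simpa using hf
  by_cases h1 : x = u
  · subst h1
    by_cases h2 : y = v
    · subst h2; linarith
    · exact hadj y x v hxy.symm huv h2 rfl rfl
  by_cases h2 : x = v
  · subst h2
    by_cases h3 : y = u
    · subst h3
      have : (⟨s(x, y), he⟩ : (⊤ : SimpleGraph V).edgeSet) = ⟨s(y, x), hf⟩ :=
        Subtype.ext Sym2.eq_swap
      rw [this]; linarith
    · exact hadj y x u hxy.symm huv.symm h3 rfl Sym2.eq_swap
  by_cases h3 : y = u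
  · subst h3
    exact hadj x y v hxy huv h2 Sym2.eq_swap rfl
  by_cases h4 : y = v
  · subst h4
    exact hadj x y u hxy huv.symm h1 Sym2.eq_swap Sym2.eq_swap
  -- disjoint edges: `c = y`, `d = x`, `b = u`, `a = v`
  obtain ⟨w, hwm, hwb⟩ := hw _ (isPar_modP (c := y) (b := u) (d := x) (Ne.symm h3)
    (Ne.symm h1)).isSpanningTree
  apply hfinish w hwb
  rw [← extW_coe w ⟨s(x, y), he⟩, ← extW_coe w ⟨s(u, v), hf⟩]
  exact nec2 hwm (Ne.symm h3) (Ne.symm h1) hxy.symm huv.symm (Ne.symm h2)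

lemma main_aux (s : (⊤ : SimpleGraph V).edgeSet → ℝ) {a b c d : V}
    (hab : a ≠ b) (hac : a ≠ c) (had : a ≠ d) (hbc : b ≠ c) (hbd : b ≠ d) (hcd : c ≠ d) :
    ∃ T T' : Finset (Sym2 V), IsSpanningTree (⊤ : SimpleGraph V) T ∧
      IsSpanningTree (⊤ : SimpleGraph V) T' ∧
      shiftedMstProb (⊤ : SimpleGraph V) s T ≠ shiftedMstProb (⊤ : SimpleGraph V) s T' := by
  by_contra hcon
  push Not at hcon
  have hfin : ∀ T, shiftMeasure ⊤ s (mstEvent ⊤ T) ≠ ⊤ := by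
    intro T
    rw [shift_apply]
    refine ne_top_of_le_ne_top ENNReal.one_ne_top ?_
    rw [← vol_box ⊤ s]
    exact measure_mono Set.inter_subset_right
  have heq : ∀ T T', IsSpanningTree (⊤ : SimpleGraph V) T → IsSpanningTree (⊤ : SimpleGraph V) T' →
      shiftMeasure ⊤ s (mstEvent ⊤ T) = shiftMeasure ⊤ s (mstEvent ⊤ T') := by
    intro T T' hT hT'
    exact (ENNReal.toReal_eq_toReal_iff' (hfin T) (hfin T')).1 (hcon T T' hT hT')
  obtain ⟨T0, hT0, hT0pos⟩ := exists_pos_s14 ⊤ s ⟨_, (isPar_star c).isSpanningTree⟩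
  have hov := overlap (s := s) fun T hT => by rw [heq T T0 hT hT0]; exact hT0pos
  rcases le_total (s ⟨s(b, c), mem_edge hbc⟩) (s ⟨s(b, d), mem_edge hbd⟩) with h | h
  · exact (star_lt hab hac had hbc hbd hcd h hov).ne
      (heq _ _ (isPar_modP hbc hbd).isSpanningTree (isPar_star c).isSpanningTree)
  · exact (star_lt hab had hac hbd hbc hcd.symm h hov).ne
      (heq _ _ (isPar_modP hbd hbc).isSpanningTree (isPar_star d).isSpanningTree)

end aux

/-- Shifts do not suffice: for `n ≥ 4` and every shift vector `s` on the edges of `K_n`,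
the shifted-interval MST distribution `M_s` on spanning trees of `K_n` is not uniform. -/
theorem shifts_do_not_suffice (n : ℕ) (hn : 4 ≤ n)
    (s : (⊤ : SimpleGraph (Fin n)).edgeSet → ℝ) :
    ∃ T T' : Finset (Sym2 (Fin n)),
      IsSpanningTree (⊤ : SimpleGraph (Fin n)) T ∧
      IsSpanningTree (⊤ : SimpleGraph (Fin n)) T' ∧
      shiftedMstProb (⊤ : SimpleGraph (Fin n)) s T ≠
        shiftedMstProb (⊤ : SimpleGraph (Fin n)) s T' := by
  exact main_aux s (a := ⟨0, by omega⟩) (b := ⟨1, by omega⟩) (c := ⟨2, by omega⟩)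
    (d := ⟨3, by omega⟩) (by simp) (by simp) (by simp) (by simp) (by simp) (by simp)

end RST
end
end

section
/- Let m ≥ 1 and let (X_1, …, X_m) be a non-colliding product measure on ℝ^m. Then there exists a non-colliding product measure (Y_1, …, Y_m) in which each Y_i is a discrete random variable supported on a finite set of at most m! points of ℝ, inducing the same distribution on the symmetric group S_m: for every permutation σ of {1,…,m}, P(X_{σ(1)} < X_{σ(2)} < ⋯ < X_{σ(m)}) = P(Y_{σ(1)} < Y_{σ(2)} < ⋯ < Y_{σ(m)}). -/
open MeasureTheory
open scoped Classical

noncomputable section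

namespace RST

/-- A point of the integral of a function lying a.e. in a convex set of a finite-dimensional
space belongs to the set (no closedness needed); version with zero mean. -/
theorem zero_mem_of_integral_zero {Ω : Type*} [MeasurableSpace Ω] (μ : Measure Ω)
    [IsProbabilityMeasure μ] (n : ℕ) :
    ∀ (E : Type) [NormedAddCommGroup E] [NormedSpace ℝ E] [FiniteDimensional ℝ E]
      (_ : Module.finrank ℝ E = n) (s : Set E) (_ : Convex ℝ s) (g : Ω → E)
      (_ : Integrable g μ) (_ : ∀ᵐ x ∂μ, g x ∈ s) (_ : ∫ x, g x ∂μ = 0), (0 : E) ∈ s := by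
  induction n using Nat.strong_induction_on with
  | _ n ih =>
    intro E _ _ _ hn s hs g hg hgs h0
    by_contra hcon
    have hne : s.Nonempty := by
      obtain ⟨x, hx⟩ := hgs.exists
      exact ⟨_, hx⟩
    have key : ∃ l : E →L[ℝ] ℝ, l ≠ 0 ∧ ∀ᵐ x ∂μ, l (g x) ≤ 0 := by
      by_cases hint : (interior s).Nonempty
      · obtain ⟨l, hl⟩ := geometric_hahn_banach_open_point hs.interior isOpen_interior
          (fun h => hcon (interior_subset h))
        refine ⟨l, ?_, ?_⟩
        · rintro rfl
          obtain ⟨a, ha⟩ := hint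
          simpa using hl a ha
        · have hcl : ∀ a ∈ s, l a ≤ 0 := by
            intro a ha
            have h1 : a ∈ closure (interior s) := by
              rw [hs.closure_interior_eq_closure_of_nonempty_interior hint]
              exact subset_closure ha
            have h2 : closure (interior s) ⊆ {a | l a ≤ 0} := by
              refine closure_minimal ?_ (isClosed_le l.continuous continuous_const)
              intro b hb
              have := hl b hb
              simp only [map_zero] at this
              exact this.le
            exact h2 h1
          filter_upwards [hgs] with x hx using hcl _ hx
      · rw [hs.interior_nonempty_iff_affineSpan_eq_top] at hint
        have hdir : (affineSpan ℝ s).direction < ⊤ := by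
          rw [lt_top_iff_ne_top]
          intro h
          exact hint ((AffineSubspace.direction_eq_top_iff_of_nonempty
            ((affineSpan_nonempty ℝ).2 hne)).1 h)
        obtain ⟨l, hl0, hl⟩ := Submodule.exists_le_ker_of_lt_top _ hdir
        obtain ⟨a, ha⟩ := hne
        have hc : ∀ b ∈ s, l b = l a := by
          intro b hb
          have : b -ᵥ a ∈ (affineSpan ℝ s).direction :=
            AffineSubspace.vsub_mem_direction (subset_affineSpan ℝ s hb) (subset_affineSpan ℝ s ha)
          have := hl this
          rw [LinearMap.mem_ker, vsub_eq_sub, map_sub] at this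
          linarith
        have hae : ∀ᵐ x ∂μ, l.toContinuousLinearMap (g x) = l a := by
          filter_upwards [hgs] with x hx using hc _ hx
        have hz : l a = 0 := by
          have h1 := (l.toContinuousLinearMap).integral_comp_comm hg
          rw [h0, map_zero, integral_congr_ae hae] at h1
          simpa using h1
        refine ⟨l.toContinuousLinearMap, ?_, ?_⟩
        · intro h
          apply hl0
          ext x
          exact DFunLike.congr_fun h x
        · filter_upwards [hae] with x hx
          rw [hx, hz]
    obtain ⟨l, hl0, hl⟩ := key
    have hli : ∫ x, l (g x) ∂μ = 0 := by
      rw [l.integral_comp_comm hg, h0, map_zero]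
    have hlz : ∀ᵐ x ∂μ, l (g x) = 0 := by
      have h1 : ∫ x, -(l (g x)) ∂μ = 0 := by rw [integral_neg, hli, neg_zero]
      rw [integral_eq_zero_iff_of_nonneg_ae] at h1
      · filter_upwards [h1] with x hx
        simpa using hx
      · filter_upwards [hl] with x hx
        simpa using hx
      · exact (l.integrable_comp hg).neg
    obtain ⟨P, hP⟩ := Submodule.ClosedComplemented.of_finiteDimensional (𝕜 := ℝ)
      (LinearMap.ker (l : E →ₗ[ℝ] ℝ))
    have hlt : Module.finrank ℝ (LinearMap.ker (l : E →ₗ[ℝ] ℝ)) < n := by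
      rw [← hn]
      apply Submodule.finrank_lt
      intro h
      apply hl0
      rw [LinearMap.ker_eq_top] at h
      ext x
      exact DFunLike.congr_fun h x
    have := ih _ hlt (LinearMap.ker (l : E →ₗ[ℝ] ℝ)) rfl
      ((LinearMap.ker (l : E →ₗ[ℝ] ℝ)).subtype ⁻¹' s) (hs.linear_preimage _)
      (fun x => P (g x)) (P.integrable_comp hg) (by
        filter_upwards [hgs, hlz] with x hx hx0
        have := hP ⟨g x, hx0⟩
        simp only at this
        rw [this]
        exact hx) (by rw [P.integral_comp_comm hg, h0, map_zero])
    exact hcon (by simpa using this)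

theorem integral_mem_of_convex {Ω : Type*} [MeasurableSpace Ω] (μ : Measure Ω)
    [IsProbabilityMeasure μ]
    {E : Type} [NormedAddCommGroup E] [NormedSpace ℝ E] [FiniteDimensional ℝ E]
    (s : Set E) (hs : Convex ℝ s) (g : Ω → E)
    (hg : Integrable g μ) (hgs : ∀ᵐ x ∂μ, g x ∈ s) : ∫ x, g x ∂μ ∈ s := by
  have := zero_mem_of_integral_zero μ _ E rfl ((fun z => (∫ x, g x ∂μ) + z) ⁻¹' s)
    (hs.translate_preimage_right _) (fun x => g x - ∫ x, g x ∂μ)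
    (hg.sub (integrable_const _)) (by
      filter_upwards [hgs] with x hx
      simpa using hx) (by
      rw [integral_sub hg (integrable_const _)]
      simp)
  simpa using this

variable {m : ℕ}

/-- Resampling coordinate `i`. -/
theorem pi_update_eq (ν : Fin m → Measure ℝ) (hprob : ∀ i, IsProbabilityMeasure (ν i))
    (i : Fin m) (ρ : Measure ℝ) [IsProbabilityMeasure ρ] :
    Measure.pi (Function.update ν i ρ) =
      (ρ.prod (Measure.pi ν)).map (fun p : ℝ × (Fin m → ℝ) => Function.update p.2 i p.1) := by
  have hpr : ∀ j, IsProbabilityMeasure (Function.update ν i ρ j) := by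
    intro j
    by_cases h : j = i
    · subst h; simpa
    · simpa [h] using hprob j
  apply Measure.pi_eq
  intro s hs
  have hmeas : Measurable (fun p : ℝ × (Fin m → ℝ) => Function.update p.2 i p.1) :=
    measurable_update'.comp measurable_swap
  rw [Measure.map_apply hmeas (MeasurableSet.univ_pi hs)]
  have : (fun p : ℝ × (Fin m → ℝ) => Function.update p.2 i p.1) ⁻¹' (Set.univ.pi s) =
      s i ×ˢ (Set.univ.pi (Function.update s i Set.univ)) := by
    ext ⟨x, y⟩
    simp only [Set.mem_preimage, Set.mem_pi, Set.mem_univ, true_imp_iff, Set.mem_prod]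
    constructor
    · intro h
      refine ⟨by simpa using h i, fun j => ?_⟩
      by_cases hj : j = i
      · subst hj; simp
      · simpa [hj] using h j
    · rintro ⟨h1, h2⟩ j
      by_cases hj : j = i
      · subst hj; simpa using h1
      · simpa [hj] using h2 j
  rw [this, Measure.prod_prod, Measure.pi_pi, ← Finset.mul_prod_erase _ _ (Finset.mem_univ i),
    ← Finset.mul_prod_erase _ (fun j => Function.update ν i ρ j (s j)) (Finset.mem_univ i)]
  simp only [Function.update_self, measure_univ, one_mul]
  congr 1
  apply Finset.prod_congr rfl
  intro j hj
  have hj : j ≠ i := Finset.ne_of_mem_erase hj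
  simp [hj]

theorem measurable_slice (ν : Fin m → Measure ℝ) (hprob : ∀ i, IsProbabilityMeasure (ν i))
    (i : Fin m) (T : Set (Fin m → ℝ)) (hT : MeasurableSet T) :
    Measurable (fun x => Measure.pi ν {y | Function.update y i x ∈ T}) :=
  measurable_measure_prodMk_left (ν := Measure.pi ν)
    ((measurable_update'.comp measurable_swap :
      Measurable (fun p : ℝ × (Fin m → ℝ) => Function.update p.2 i p.1)) hT)

theorem pi_update_apply (ν : Fin m → Measure ℝ) (hprob : ∀ i, IsProbabilityMeasure (ν i))
    (i : Fin m) (ρ : Measure ℝ) [IsProbabilityMeasure ρ] (T : Set (Fin m → ℝ))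
    (hT : MeasurableSet T) :
    Measure.pi (Function.update ν i ρ) T =
      ∫⁻ x, Measure.pi ν {y | Function.update y i x ∈ T} ∂ρ := by
  have hmeas : Measurable (fun p : ℝ × (Fin m → ℝ) => Function.update p.2 i p.1) :=
    measurable_update'.comp measurable_swap
  rw [pi_update_eq ν hprob, Measure.map_apply hmeas hT, Measure.prod_apply (hmeas hT)]
  rfl

theorem measurableSet_coll (j k : Fin m) : MeasurableSet {x : Fin m → ℝ | x j = x k} :=
  measurableSet_eq_fun (measurable_pi_apply j) (measurable_pi_apply k)

theorem measurableSet_ord (σ : Equiv.Perm (Fin m)) :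
    MeasurableSet {x : Fin m → ℝ | StrictMono fun i => x (σ i)} := by
  have : {x : Fin m → ℝ | StrictMono fun i => x (σ i)} =
      ⋂ (a : Fin m) (b : Fin m) (_ : a < b), {x | x (σ a) < x (σ b)} := by
    ext x
    simp [StrictMono]
  rw [this]
  refine MeasurableSet.iInter fun a => MeasurableSet.iInter fun b => MeasurableSet.iInter fun _ => ?_
  exact measurableSet_lt (measurable_pi_apply _) (measurable_pi_apply _)

/-- Total probability: if collisions are null then the order events partition the space. -/
theorem sum_ord_eq_one (μ : Measure (Fin m → ℝ)) [IsProbabilityMeasure μ]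
    (f : (Fin m → ℝ) → (Fin m → ℝ)) (hf : Measurable f)
    (h : ∀ j k : Fin m, j ≠ k → μ {y | f y ∈ {x : Fin m → ℝ | x j = x k}} = 0) :
    ∑ σ : Equiv.Perm (Fin m), μ {y | f y ∈ {x : Fin m → ℝ | StrictMono fun i => x (σ i)}} = 1 := by
  have hd : Pairwise (Function.onFun Disjoint (fun σ : Equiv.Perm (Fin m) =>
      {y | f y ∈ {x : Fin m → ℝ | StrictMono fun i => x (σ i)}})) := by
    intro σ τ hst
    rw [Function.onFun, Set.disjoint_left]
    intro y h1 h2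
    apply hst
    have h1 : StrictMono fun i => f y (σ i) := h1
    have h2 : StrictMono fun i => f y (τ i) := h2
    have h3 := Tuple.unique_monotone (f := f y) (σ := σ) (τ := τ) h1.monotone h2.monotone
    have hinj : Function.Injective (f y) := by
      have : f y = (fun i => f y (σ i)) ∘ σ.symm := by ext; simp
      rw [this]
      exact h1.injective.comp σ.symm.injective
    ext a
    exact congrArg Fin.val (hinj (congrFun h3 a))
  rw [← tsum_fintype (L := .unconditional _), ← measure_iUnion hd (fun σ => hf (measurableSet_ord σ))]
  refine (prob_compl_eq_zero_iff (MeasurableSet.iUnion fun σ => hf (measurableSet_ord σ))).1 ?_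
  refine measure_mono_null (t := ⋃ (j : Fin m) (k : Fin m) (_ : j ≠ k),
    {y | f y ∈ {x : Fin m → ℝ | x j = x k}}) ?_ ?_
  · intro y hy
    by_contra hcon
    apply hy
    have hinj : Function.Injective (f y) := by
      intro j k hjk
      by_contra hne
      apply hcon
      simp only [Set.mem_iUnion]
      exact ⟨j, k, hne, hjk⟩
    simp only [Set.mem_iUnion]
    exact ⟨Tuple.sort (f y), (Tuple.monotone_sort (f y)).strictMono_of_injective
      (hinj.comp (Equiv.injective _))⟩
  · simp only [measure_iUnion_null_iff]
    exact h

theorem step (ν : Fin m → Measure ℝ) (hprob : ∀ i, IsProbabilityMeasure (ν i))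
    (hnc : ∀ i j : Fin m, i ≠ j → Measure.pi ν {x | x i = x j} = 0) (i : Fin m) :
    ∃ ρ : Measure ℝ, IsProbabilityMeasure ρ ∧
      (∀ j k : Fin m, j ≠ k → Measure.pi (Function.update ν i ρ) {x | x j = x k} = 0) ∧
      (∃ S : Finset ℝ, S.card ≤ Nat.factorial m ∧ ρ ((↑S : Set ℝ)ᶜ) = 0) ∧
      ∀ σ : Equiv.Perm (Fin m),
        Measure.pi ν {x | StrictMono fun i => x (σ i)} =
          Measure.pi (Function.update ν i ρ) {x | StrictMono fun i => x (σ i)} := by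
  set F : Equiv.Perm (Fin m) → ℝ → ENNReal := fun σ x =>
    Measure.pi ν {y | Function.update y i x ∈ {x : Fin m → ℝ | StrictMono fun i => x (σ i)}} with hF
  set G : Fin m → Fin m → ℝ → ENNReal := fun j k x =>
    Measure.pi ν {y | Function.update y i x ∈ {x : Fin m → ℝ | x j = x k}} with hG
  have hFm : ∀ σ, Measurable (F σ) := fun σ => measurable_slice ν hprob i _ (measurableSet_ord σ)
  have hGm : ∀ j k, Measurable (G j k) := fun j k =>
    measurable_slice ν hprob i _ (measurableSet_coll j k)
  have hF1 : ∀ σ x, F σ x ≤ 1 := fun σ x => prob_le_one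
  have hFtop : ∀ σ x, F σ x ≠ ⊤ := fun σ x => measure_ne_top _ _
  set A : Set ℝ := {x | ∀ j k, j ≠ k → G j k x = 0} with hA
  have hupd : ∀ T : Set (Fin m → ℝ), MeasurableSet T → Measure.pi ν T =
      ∫⁻ x, Measure.pi ν {y | Function.update y i x ∈ T} ∂(ν i) := by
    intro T hT
    have := pi_update_apply ν hprob i (ν i) T hT
    rwa [Function.update_eq_self] at this
  have hAae : ∀ᵐ x ∂(ν i), x ∈ A := by
    simp only [hA, Set.mem_ofPred_eq]
    rw [ae_all_iff]; intro j
    rw [ae_all_iff]; intro k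
    by_cases hjk : j = k
    · simp [hjk]
    · have h1 := hnc j k hjk
      rw [hupd _ (measurableSet_coll j k)] at h1
      rw [lintegral_eq_zero_iff (hGm j k)] at h1
      filter_upwards [h1] with x hx _ using hx
  have hsum : ∀ x ∈ A, ∑ σ, F σ x = 1 := by
    intro x hx
    exact sum_ord_eq_one (Measure.pi ν) (fun y => Function.update y i x)
      measurable_update_left hx
  set g : ℝ → (Equiv.Perm (Fin m) → ℝ) := fun x σ => (F σ x).toReal with hg
  have hgi : ∀ σ, Integrable (fun x => g x σ) (ν i) := by
    intro σ
    refine Integrable.of_bound (hFm σ).ennreal_toReal.aestronglyMeasurable 1 ?_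
    refine Filter.Eventually.of_forall fun x => ?_
    rw [Real.norm_of_nonneg ENNReal.toReal_nonneg]
    exact ENNReal.toReal_le_of_le_ofReal zero_le_one (by simpa using hF1 σ x)
  have hgI : Integrable g (ν i) := Integrable.of_eval hgi
  have hmem := integral_mem_of_convex (ν i) (convexHull ℝ (g '' A)) (convex_convexHull _ _) g hgI (by
    filter_upwards [hAae] with x hx
    exact subset_convexHull _ _ ⟨x, hx, rfl⟩)
  obtain ⟨ι, _, z, w, hz, hzi, hw, hw1, hwz⟩ := eq_pos_convex_span_of_mem_convexHull hmem
  have hz' : ∀ a, ∃ x ∈ A, g x = z a := fun a => hz ⟨a, rfl⟩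
  choose p hpA hpz using hz'
  have hzsum : ∀ a, ∑ σ, z a σ = 1 := by
    intro a
    rw [← hpz a]
    simp only [hg]
    rw [← ENNReal.toReal_sum (fun σ _ => hFtop σ _), hsum _ (hpA a)]
    simp
  have hlin : LinearIndependent ℝ z := by
    rw [Fintype.linearIndependent_iff]
    intro c hc a
    refine affineIndependent_iff.1 hzi Finset.univ c ?_ hc a (Finset.mem_univ a)
    have h1 : ∑ σ, (∑ a, c a • z a) σ = 0 := by rw [hc]; simp
    simp only [Finset.sum_apply, Pi.smul_apply, smul_eq_mul] at h1
    rw [Finset.sum_comm] at h1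
    simpa [← Finset.mul_sum, hzsum] using h1
  have hcard : Fintype.card ι ≤ Nat.factorial m := by
    have := hlin.fintype_card_le_finrank
    simpa [Fintype.card_perm] using this
  set ρ : Measure ℝ := ∑ a, ENNReal.ofReal (w a) • Measure.dirac (p a) with hρ
  have hint : ∀ f : ℝ → ENNReal, Measurable f → ∫⁻ x, f x ∂ρ = ∑ a, ENNReal.ofReal (w a) * f (p a) := by
    intro f hf
    rw [hρ, lintegral_finsetSum_measure]
    simp [lintegral_dirac' _ hf]
  have hρp : IsProbabilityMeasure ρ := by
    constructor
    have := hint (fun _ => 1) measurable_const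
    rw [lintegral_one] at this
    rw [this]
    simp only [mul_one]
    rw [← ENNReal.ofReal_sum_of_nonneg (fun a _ => (hw a).le), hw1, ENNReal.ofReal_one]
  refine ⟨ρ, hρp, ?_, ⟨Finset.univ.image p, Finset.card_image_le.trans hcard, ?_⟩, ?_⟩
  · intro j k hjk
    rw [pi_update_apply ν hprob i ρ _ (measurableSet_coll j k)]
    rw [hint _ (hGm j k)]
    refine Finset.sum_eq_zero fun a _ => ?_
    have : G j k (p a) = 0 := hpA a j k hjk
    rw [this, mul_zero]
  · have hms : MeasurableSet ((↑(Finset.univ.image p) : Set ℝ)ᶜ) :=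
      (Finset.measurableSet _).compl
    rw [hρ, Measure.finsetSum_apply]
    refine Finset.sum_eq_zero fun a _ => ?_
    rw [Measure.smul_apply, Measure.dirac_apply' _ hms]
    simp
  · intro σ
    rw [pi_update_apply ν hprob i ρ _ (measurableSet_ord σ), hint _ (hFm σ),
      hupd _ (measurableSet_ord σ)]
    change ∫⁻ x, F σ x ∂(ν i) = ∑ a, ENNReal.ofReal (w a) * F σ (p a)
    have h1 : ∑ a, w a * z a σ = ∫ x, (F σ x).toReal ∂(ν i) := by
      have := congrFun hwz σ
      rw [eval_integral hgi] at this
      simpa using this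
    have h2 : ∫⁻ x, F σ x ∂(ν i) = ENNReal.ofReal (∫ x, (F σ x).toReal ∂(ν i)) := by
      rw [ofReal_integral_eq_lintegral_ofReal (hgi σ)
        (Filter.Eventually.of_forall fun x => ENNReal.toReal_nonneg)]
      refine lintegral_congr fun x => ?_
      rw [ENNReal.ofReal_toReal (hFtop σ x)]
    have hzn : ∀ a, z a σ = (F σ (p a)).toReal := fun a => by rw [← hpz a]
    rw [h2, ← h1, ENNReal.ofReal_sum_of_nonneg]
    · refine Finset.sum_congr rfl fun a _ => ?_
      rw [ENNReal.ofReal_mul (hw a).le, hzn, ENNReal.ofReal_toReal (hFtop σ _)]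
    · intro a _
      rw [hzn]
      exact mul_nonneg (hw a).le ENNReal.toReal_nonneg

theorem iterate_step (ν : Fin m → Measure ℝ) (hprob : ∀ i, IsProbabilityMeasure (ν i))
    (hnc : ∀ i j : Fin m, i ≠ j → Measure.pi ν {x | x i = x j} = 0) (t : Finset (Fin m)) :
    ∃ ν' : Fin m → Measure ℝ,
      (∀ i, IsProbabilityMeasure (ν' i)) ∧
      (∀ i j : Fin m, i ≠ j → Measure.pi ν' {x | x i = x j} = 0) ∧
      (∀ i ∈ t, ∃ S : Finset ℝ, S.card ≤ Nat.factorial m ∧ ν' i ((↑S : Set ℝ)ᶜ) = 0) ∧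
      ∀ σ : Equiv.Perm (Fin m),
        Measure.pi ν {x | StrictMono fun i => x (σ i)} =
          Measure.pi ν' {x | StrictMono fun i => x (σ i)} := by
  induction t using Finset.induction_on with
  | empty => exact ⟨ν, hprob, hnc, by simp, fun _ => rfl⟩
  | insert i t hi ih =>
    obtain ⟨ν', h1, h2, h3, h4⟩ := ih
    obtain ⟨ρ, hρ, g2, g3, g4⟩ := step ν' h1 h2 i
    refine ⟨Function.update ν' i ρ, ?_, g2, ?_, fun σ => (h4 σ).trans (g4 σ)⟩
    · intro j
      by_cases hj : j = i
      · subst hj; simpa using hρ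
      · simpa [hj] using h1 j
    · intro j hj
      by_cases hji : j = i
      · subst hji; simpa using g3
      · simpa [hji] using h3 j (Finset.mem_of_mem_insert_of_ne hj hji)

/-- Bounded-support discrete product measures suffice: given a non-colliding product
measure `ν` on `ℝ^m` (`m` independent coordinates, ties having probability zero), there
is a non-colliding product measure `ν'` each of whose coordinates is supported on a
finite set of at most `m!` points, inducing the same distribution on the symmetric
group: for every permutation `σ`, the probability that the coordinates occur in
increasing order along `σ` is the same for `ν` and `ν'`. -/
theorem discrete_product_measures_suffice (m : ℕ) (hm : 1 ≤ m)
    (ν : Fin m → Measure ℝ) (hprob : ∀ i, IsProbabilityMeasure (ν i))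
    (hnc : ∀ i j : Fin m, i ≠ j → Measure.pi ν {x | x i = x j} = 0) :
    ∃ ν' : Fin m → Measure ℝ,
      (∀ i, IsProbabilityMeasure (ν' i)) ∧
      (∀ i j : Fin m, i ≠ j → Measure.pi ν' {x | x i = x j} = 0) ∧
      (∀ i, ∃ S : Finset ℝ, S.card ≤ Nat.factorial m ∧ ν' i ((↑S : Set ℝ)ᶜ) = 0) ∧
      ∀ σ : Equiv.Perm (Fin m),
        Measure.pi ν {x | StrictMono fun i => x (σ i)} =
          Measure.pi ν' {x | StrictMono fun i => x (σ i)} := by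
  obtain ⟨ν', h1, h2, h3, h4⟩ := iterate_step ν hprob hnc Finset.univ
  exact ⟨ν', h1, h2, fun i => h3 i (Finset.mem_univ i), h4⟩

end RST
end
end

section
/- Let k ≥ 1, let x_1, …, x_r ∈ [0,1] and α_1, …, α_r ≥ 0 with ∑_{i=1}^r α_i = 1, and suppose ∑_{i=1}^r α_i p(x_i) = ∫_0^1 p(x) dx for every real polynomial p of degree at most k (a degree-k quadrature scheme). Let U_1, …, U_k be i.i.d. uniform random variables on [0,1] and let Y be an independent random variable with law ∑_{i=1}^r α_i δ_{x_i}. Then for every j ∈ {0, 1, …, k}, the probability that exactly j of the variables U_1, …, U_k are less than Y equals 1/(k+1). -/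
open MeasureTheory
open scoped Classical ENNReal

noncomputable section

namespace RST

/-- Bernstein polynomials have the same integral. -/
theorem integral_bernstein (n j : ℕ) (hj : j ≤ n) :
    ∫ t in (0 : ℝ)..1, (bernsteinPolynomial ℝ n j).eval t = ((n : ℝ) + 1)⁻¹ := by
  induction hj using Nat.decreasingInduction with
  | self => simp [bernsteinPolynomial]
  | @of_succ m hm ih =>
    rw [← ih]
    have hd := bernsteinPolynomial.derivative_succ (R := ℝ) (n + 1) m
    have h1 : ∫ t in (0 : ℝ)..1,
        (Polynomial.derivative (bernsteinPolynomial ℝ (n + 1) (m + 1))).eval t = 0 := by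
      rw [intervalIntegral.integral_eq_sub_of_hasDerivAt
        (f := fun t => (bernsteinPolynomial ℝ (n + 1) (m + 1)).eval t)
        (fun t _ => Polynomial.hasDerivAt _ t)
        ((Polynomial.continuous _).intervalIntegrable _ _)]
      rw [bernsteinPolynomial.eval_at_0, bernsteinPolynomial.eval_at_1,
        if_neg (by omega), if_neg (by omega), sub_zero]
    rw [hd] at h1
    simp only [Nat.add_sub_cancel, Polynomial.eval_mul, Polynomial.eval_sub,
      Polynomial.eval_natCast] at h1
    rw [intervalIntegral.integral_const_mul, intervalIntegral.integral_sub
      ((Polynomial.continuous _).intervalIntegrable _ _)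
      ((Polynomial.continuous _).intervalIntegrable _ _)] at h1
    have : ((n + 1 : ℕ) : ℝ) ≠ 0 := by positivity
    rcases mul_eq_zero.1 h1 with h | h
    · exact absurd h this
    · linarith

theorem measure_rank (k j : ℕ) (y : ℝ) (hy : y ∈ Set.Icc (0 : ℝ) 1) :
    (Measure.pi fun _ : Fin k => (volume : Measure ℝ).restrict (Set.Icc (0 : ℝ) 1))
      {u | (Finset.univ.filter fun i : Fin k => u i < y).card = j}
      = ENNReal.ofReal ((bernsteinPolynomial ℝ k j).eval y) := by
  have hset : {u : Fin k → ℝ | (Finset.univ.filter fun i : Fin k => u i < y).card = j}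
      = ⋃ S ∈ Finset.powersetCard j (Finset.univ : Finset (Fin k)),
        Set.pi Set.univ (fun i => if i ∈ S then Set.Iio y else Set.Ici y) := by
    ext u
    simp only [Set.mem_ofPred_eq, Set.mem_iUnion, Finset.mem_powersetCard, Set.mem_pi,
      Set.mem_univ, true_imp_iff, exists_prop]
    constructor
    · intro h
      refine ⟨_, ⟨Finset.subset_univ _, h⟩, fun i => ?_⟩
      by_cases hi : u i < y
      · simp [hi]
      · simp [hi, not_lt.1 hi]
    · rintro ⟨S, ⟨-, hS⟩, hu⟩
      rw [← hS]
      congr 1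
      ext i
      have := hu i
      by_cases hi : i ∈ S
      · simpa [hi] using this
      · simpa [hi] using this
  have h1 : (volume : Measure ℝ).restrict (Set.Icc (0 : ℝ) 1) (Set.Iio y)
      = ENNReal.ofReal y := by
    rw [Measure.restrict_apply measurableSet_Iio]
    have : Set.Iio y ∩ Set.Icc (0 : ℝ) 1 = Set.Ico 0 y := by
      ext t
      simp only [Set.mem_inter_iff, Set.mem_Iio, Set.mem_Icc, Set.mem_Ico]
      constructor
      · rintro ⟨a, b, c⟩
        exact ⟨b, a⟩
      · rintro ⟨a, b⟩
        exact ⟨b, a, by linarith [hy.2]⟩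
    rw [this, Real.volume_Ico, sub_zero]
  have h2 : (volume : Measure ℝ).restrict (Set.Icc (0 : ℝ) 1) (Set.Ici y)
      = ENNReal.ofReal (1 - y) := by
    rw [Measure.restrict_apply measurableSet_Ici]
    have : Set.Ici y ∩ Set.Icc (0 : ℝ) 1 = Set.Icc y 1 := by
      ext t
      simp only [Set.mem_inter_iff, Set.mem_Ici, Set.mem_Icc]
      constructor
      · rintro ⟨a, b, c⟩
        exact ⟨a, c⟩
      · rintro ⟨a, b⟩
        exact ⟨a, by linarith [hy.1], b⟩
    rw [this, Real.volume_Icc]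
  rw [hset, measure_biUnion_finset]
  · have hS : ∀ S ∈ Finset.powersetCard j (Finset.univ : Finset (Fin k)),
        (Measure.pi fun _ : Fin k => (volume : Measure ℝ).restrict (Set.Icc (0 : ℝ) 1))
          (Set.pi Set.univ (fun i => if i ∈ S then Set.Iio y else Set.Ici y))
        = ENNReal.ofReal (y ^ j * (1 - y) ^ (k - j)) := by
      intro S hS
      rw [Finset.mem_powersetCard] at hS
      rw [Measure.pi_pi]
      have : ∀ i, (volume : Measure ℝ).restrict (Set.Icc (0 : ℝ) 1)
          (if i ∈ S then Set.Iio y else Set.Ici y)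
          = if i ∈ S then ENNReal.ofReal y else ENNReal.ofReal (1 - y) := by
        intro i
        split_ifs
        · exact h1
        · exact h2
      simp only [this]
      rw [Finset.prod_ite, Finset.prod_const, Finset.prod_const,
        ENNReal.ofReal_mul (pow_nonneg hy.1 _), ENNReal.ofReal_pow hy.1,
        ENNReal.ofReal_pow (by linarith [hy.2])]
      have e1 : (Finset.univ.filter fun i => i ∈ S) = S := by ext; simp
      have e2 : (Finset.univ.filter fun i => i ∉ S) = Sᶜ := by ext; simp
      rw [e1, e2, Finset.card_compl, hS.2, Fintype.card_fin]
    rw [Finset.sum_congr rfl hS, Finset.sum_const, Finset.card_powersetCard,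
      Finset.card_univ, Fintype.card_fin, nsmul_eq_mul, ← ENNReal.ofReal_natCast,
      ← ENNReal.ofReal_mul (by positivity)]
    congr 1
    simp [bernsteinPolynomial, mul_assoc]
  · intro S _ T _ hST
    refine Set.disjoint_left.2 fun u hu hv => hST ?_
    ext i
    have a := hu i trivial
    have b := hv i trivial
    by_cases hi : i ∈ S <;> by_cases hi' : i ∈ T <;> simp only [hi, hi', if_true, if_false,
      Set.mem_Iio, Set.mem_Ici] at a b ⊢ <;> linarith
  · intro S _
    refine MeasurableSet.univ_pi fun i => ?_
    split_ifs
    · exact measurableSet_Iio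
    · exact measurableSet_Ici

theorem measurable_rank (k j : ℕ) : MeasurableSet
    {q : (Fin k → ℝ) × ℝ | (Finset.univ.filter fun i : Fin k => q.1 i < q.2).card = j} := by
  have : Measurable fun q : (Fin k → ℝ) × ℝ =>
      (Finset.univ.filter fun i : Fin k => q.1 i < q.2).card := by
    simp only [Finset.card_filter]
    refine Finset.measurable_sum _ fun i _ => ?_
    refine Measurable.ite ?_ measurable_const measurable_const
    exact measurableSet_lt (by fun_prop) (by fun_prop)
  exact this (measurableSet_singleton j)

/-- Quadrature condition: if `∑ αᵢ δ_{xᵢ}` is a degree-`k` quadrature scheme on `[0,1]`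
(with `k ≥ 1`), `U₁, …, U_k` are i.i.d. uniform on `[0,1]` and `Y` is an independent
draw from `∑ αᵢ δ_{xᵢ}`, then for every `j ∈ {0, …, k}`, the probability that exactly
`j` of the `Uᵢ` are less than `Y` equals `1/(k+1)`. -/
theorem quadrature_uniform_rank (k r : ℕ) (hk : 1 ≤ k)
    (x : Fin r → ℝ) (hx : ∀ i, x i ∈ Set.Icc (0 : ℝ) 1)
    (α : Fin r → ℝ) (hα0 : ∀ i, 0 ≤ α i) (hα1 : ∑ i, α i = 1)
    (hquad : ∀ p : Polynomial ℝ, p.natDegree ≤ k →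
      ∑ i, α i * p.eval (x i) = ∫ t in (0 : ℝ)..1, p.eval t)
    (j : ℕ) (hj : j ≤ k) :
    ((Measure.pi fun _ : Fin k => (volume : Measure ℝ).restrict (Set.Icc (0 : ℝ) 1)).prod
        (∑ i, ENNReal.ofReal (α i) • Measure.dirac (x i)))
      {q : (Fin k → ℝ) × ℝ | (Finset.univ.filter fun i : Fin k => q.1 i < q.2).card = j}
      = ((k : ℝ≥0∞) + 1)⁻¹ := by
  haveI : IsFiniteMeasure (∑ i, ENNReal.ofReal (α i) • Measure.dirac (x i)) := by
    refine ⟨?_⟩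
    simp [Measure.finsetSum_apply, ENNReal.sum_lt_top]
  rw [Measure.prod_apply_symm (measurable_rank k j), lintegral_finsetSum_measure]
  have hm : ∀ i, ∫⁻ y, (Measure.pi fun _ : Fin k =>
      (volume : Measure ℝ).restrict (Set.Icc (0 : ℝ) 1))
      ((fun u => (u, y)) ⁻¹'
        {q : (Fin k → ℝ) × ℝ | (Finset.univ.filter fun i : Fin k => q.1 i < q.2).card = j})
      ∂(ENNReal.ofReal (α i) • Measure.dirac (x i))
      = ENNReal.ofReal (α i * (bernsteinPolynomial ℝ k j).eval (x i)) := by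
    intro i
    rw [lintegral_smul_measure, lintegral_dirac, smul_eq_mul, ENNReal.ofReal_mul (hα0 i),
      ← measure_rank k j (x i) (hx i)]
    rfl
  simp only [hm]
  have hdeg : (bernsteinPolynomial ℝ k j).natDegree ≤ k := by
    unfold bernsteinPolynomial
    have : ((k.choose j : Polynomial ℝ) * Polynomial.X ^ j *
        (1 - Polynomial.X) ^ (k - j)).natDegree ≤ 0 + j * 1 + (k - j) * 1 := by
      refine Polynomial.natDegree_mul_le_of_le (Polynomial.natDegree_mul_le_of_le ?_ ?_) ?_
      · exact (Polynomial.natDegree_natCast _).le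
      · exact Polynomial.natDegree_pow_le_of_le _ Polynomial.natDegree_X_le
      · refine Polynomial.natDegree_pow_le_of_le _ ?_
        exact Polynomial.natDegree_sub_le_of_le
          (Polynomial.natDegree_one.le.trans zero_le_one) Polynomial.natDegree_X_le
    omega
  rw [← ENNReal.ofReal_sum_of_nonneg, hquad _ hdeg, integral_bernstein k j hj,
    ENNReal.ofReal_inv_of_pos (by positivity), ENNReal.ofReal_add (by positivity) zero_le_one,
    ENNReal.ofReal_natCast, ENNReal.ofReal_one]
  intro i _
  refine mul_nonneg (hα0 i) ?_
  have h0 := (hx i).1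
  have h1 : 0 ≤ 1 - x i := by linarith [(hx i).2]
  simp only [bernsteinPolynomial, Polynomial.eval_mul, Polynomial.eval_pow, Polynomial.eval_sub,
    Polynomial.eval_natCast, Polynomial.eval_X, Polynomial.eval_one]
  positivity

end RST
end
end
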